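/- arXiv:math/0103044 — 4 statements merged into one kernel-verified Lean document; each statement's English description precedes it below -/
import Mathlib

section
/- Let (Φ, 1, N, *) be a fusion ring. Then there exists a unitary complex matrix S indexed by Φ×Φ with S_{1,i} > 0 and S_{a,1} > 0 for all a, i ∈ Φ, satisfying Verlinde's formula N_{ab}^c = ∑_{i∈Φ} S_{ai} S_{bi} conj(S_{ci})/S_{1,i} for all a, b, c ∈ Φ; moreover S is unique up to a permutation of its columns (any two such matrices differ by right multiplication by a permutation matrix). Furthermore, the fusion ring is self-dual if and only if there exist bijections ι, ι' : Φ → Φ such that S_{a, ι'b} = S_{b, ιa} for all a, b ∈ Φ. -/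
open scoped BigOperators
open Complex

/-- A fusion ring on a finite set `Φ`: a distinguished identity element, nonnegative rational
structure constants `N a b c`, and an involution `star` with `star one = one`, such that the
induced product on the free `ℚ`-vector space on `Φ` is commutative, associative, has `one` as
identity, the linear extension of `star` is a ring homomorphism, and `N a b one = δ_{b, a*}`. -/
structure FusionRing (Φ : Type) [Fintype Φ] [DecidableEq Φ] where
  one : Φ
  N : Φ → Φ → Φ → ℚ
  star : Φ → Φ
  N_nonneg : ∀ a b c, 0 ≤ N a b c
  mul_comm : ∀ a b c, N a b c = N b a c
  one_mul : ∀ a c, N one a c = if a = c then 1 else 0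
  mul_assoc : ∀ a b c e, ∑ d, N a b d * N d c e = ∑ d, N b c d * N a d e
  star_involutive : ∀ a, star (star a) = a
  star_one : star one = one
  star_hom : ∀ a b c, N (star a) (star b) (star c) = N a b c
  N_one : ∀ a b, N a b one = if b = star a then 1 else 0

/-- The canonical unitary matrix of a fusion ring: a unitary `Φ×Φ` complex matrix whose
`one`-row and `one`-column entries are real and strictly positive, satisfying Verlinde's
formula for the structure constants. -/
def IsCanonicalS {Φ : Type} [Fintype Φ] [DecidableEq Φ] (F : FusionRing Φ)
    (S : Matrix Φ Φ ℂ) : Prop :=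
  S * S.conjTranspose = 1 ∧
  (∀ i, (S F.one i).im = 0 ∧ 0 < (S F.one i).re) ∧
  (∀ a, (S a F.one).im = 0 ∧ 0 < (S a F.one).re) ∧
  (∀ a b c, (F.N a b c : ℂ) = ∑ i, S a i * S b i * (starRingEnd ℂ) (S c i) / S F.one i)

/-!
Multiplication by the basis elements gives a commuting family of normal operators on the Hilbert
space with orthonormal basis `Φ`, since the adjoint of multiplication by `a` is multiplication by
`a*`. Hence these operators are simultaneously diagonalizable, and their joint eigenvectors are,
up to scalars, the characters of the ring: the normalized characters form an orthonormal basis.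
For a unitary matrix with positive first row, Verlinde's formula says that the columns are joint
eigenvectors, so such matrices are the tables of normalized characters. The only freedom is the
order of the columns, which gives uniqueness, and the first column is positive if and only if the
first character is. A positive character exists by a Perron-Frobenius argument.

Self-duality along `ι` means that `Sᵀ` with rows permuted by `ι` is another canonical matrix, so
by uniqueness it is `S` with columns permuted by some `ι'`. Conversely, `ι` and `ι'` turn the dual
Verlinde sums into those of `S`. Both directions use that `ι` fixes the identity element.
-/

open scoped ComplexConjugate ComplexOrder Matrix

section LinearAlgebra

open Module.End ComplexStarModule
open scoped InnerProductSpace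

theorem commute_realPart {A : Type*} [Ring A] [StarRing A] [Algebra ℂ A] [StarModule ℂ A] {a b : A}
    (h : Commute a b) (h' : Commute a (star b)) : Commute a (ℜ b : A) := by
  rw [realPart_apply_coe]
  exact (h.add_right h').smul_right _

theorem commute_imaginaryPart {A : Type*} [Ring A] [StarRing A] [Algebra ℂ A] [StarModule ℂ A]
    {a b : A} (h : Commute a b) (h' : Commute a (star b)) : Commute a (ℑ b : A) := by
  rw [imaginaryPart_apply_coe]
  exact ((h.sub_right h').smul_right _).smul_right _

/-- Reduces to the symmetric case by taking the real and imaginary parts of the operators. -/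
theorem iSup_iInf_eigenspace_eq_top_of_commute_star {ι E : Type*} [NormedAddCommGroup E]
    [InnerProductSpace ℂ E] [FiniteDimensional ℂ E] {T : ι → Module.End ℂ E}
    (hT : ∀ i j, Commute (T i) (T j)) (hT' : ∀ i j, Commute (T i) (star (T j))) :
    ⨆ μ : ι → ℂ, ⨅ i, eigenspace (T i) (μ i) = ⊤ := by
  have hT'' (i j) : Commute (star (T i)) (T j) := (hT' j i).symm
  have hstar (i j) : Commute (star (T i)) (star (T j)) := (hT i j).star_star
  let A : ι ⊕ ι → Module.End ℂ E := Sum.elim (fun i ↦ ℜ (T i)) (fun i ↦ ℑ (T i))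
  have hA_symm : ∀ k, (A k).IsSymmetric := by
    rintro (i | i)
    · exact (LinearMap.isSymmetric_iff_isSelfAdjoint _).2 (ℜ (T i)).2
    · exact (LinearMap.isSymmetric_iff_isSelfAdjoint _).2 (ℑ (T i)).2
  have hA {b : Module.End ℂ E} (hb : ∀ i, Commute b (T i)) (hb' : ∀ i, Commute b (star (T i))) :
      ∀ k, Commute b (A k) := by
    rintro (i | i)
    · exact commute_realPart (hb i) (hb' i)
    · exact commute_imaginaryPart (hb i) (hb' i)
  have hA_comm (k l) : Commute (A k) (A l) :=
    hA (fun i ↦ (hA (hT i) (hT' i) k).symm) (fun i ↦ (hA (hT'' i) (hstar i) k).symm) l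
  rw [eq_top_iff, ← LinearMap.IsSymmetric.iSup_iInf_eq_top_of_commute hA_symm
    fun k l _ ↦ hA_comm k l]
  refine iSup_le fun γ v hv ↦ Submodule.mem_iSup_of_mem
    (fun i ↦ γ (.inl i) + Complex.I * γ (.inr i)) ?_
  simp only [Submodule.mem_iInf, mem_eigenspace_iff] at hv ⊢
  intro i
  have hre : (ℜ (T i) : Module.End ℂ E) v = γ (.inl i) • v := hv (.inl i)
  have him : (ℑ (T i) : Module.End ℂ E) v = γ (.inr i) • v := hv (.inr i)
  rw [← realPart_add_I_smul_imaginaryPart (T i), LinearMap.add_apply, LinearMap.smul_apply,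
    hre, him, add_smul, mul_smul]

theorem re_inner_map_self_le_of_eigenbasis {𝕜 ι E : Type*} [RCLike 𝕜] [NormedAddCommGroup E]
    [InnerProductSpace 𝕜 E] [Fintype ι] (b : OrthonormalBasis ι 𝕜 E) {T : E →ₗ[𝕜] E}
    {μ : ι → 𝕜} (hT : ∀ i, T (b i) = μ i • b i) {g : ℝ} (hg : ∀ i, RCLike.re (μ i) ≤ g) (v : E) :
    RCLike.re ⟪v, T v⟫_𝕜 ≤ g * ‖v‖ ^ 2 := by
  have hTv (i : ι) : ⟪b i, T v⟫_𝕜 = μ i * ⟪b i, v⟫_𝕜 := by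
    classical
    conv_lhs => rw [← b.sum_repr' v]
    simp [hT, inner_sum, inner_smul_right, orthonormal_iff_ite.1 b.orthonormal, mul_comm]
  calc RCLike.re ⟪v, T v⟫_𝕜 = ∑ i, RCLike.re (μ i) * ‖⟪b i, v⟫_𝕜‖ ^ 2 := by
        rw [← b.sum_inner_mul_inner, map_sum]
        refine Finset.sum_congr rfl fun i _ ↦ ?_
        rw [hTv, mul_left_comm, ← inner_conj_symm, RCLike.conj_mul, ← RCLike.ofReal_pow,
          RCLike.re_mul_ofReal]
    _ ≤ ∑ i, g * ‖⟪b i, v⟫_𝕜‖ ^ 2 := by gcongr with i; exact hg i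
    _ = g * ‖v‖ ^ 2 := by rw [← Finset.mul_sum, b.sum_sq_norm_inner_right]

end LinearAlgebra

section UnitaryMatrix

/-- The right-hand side of Verlinde's formula for the matrix `S`, with denominators taken from the
row `o`. The structure constants of a fusion ring are the Verlinde sums of `S` and the dual ones
are those of `Sᵀ`, both with `o` the identity element. -/
noncomputable def verlindeSum {m n : Type*} [Fintype n] (S : Matrix m n ℂ) (o a b c : m) : ℂ :=
  ∑ i, S a i * S b i * conj (S c i) / S o i

variable {n : Type*} [Fintype n] [DecidableEq n] {S : Matrix n n ℂ}

theorem sum_mul_conj_of_mem_unitaryGroup (hS : S ∈ Matrix.unitaryGroup n ℂ) (a b : n) :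
    ∑ i, S a i * conj (S b i) = if a = b then 1 else 0 := by
  simpa [Matrix.mul_apply, Matrix.one_apply] using
    congrFun₂ (Matrix.mem_unitaryGroup_iff.1 hS) a b

theorem sum_conj_mul_of_mem_unitaryGroup (hS : S ∈ Matrix.unitaryGroup n ℂ) (i j : n) :
    ∑ a, conj (S a i) * S a j = if i = j then 1 else 0 := by
  simpa [Matrix.mul_apply, Matrix.one_apply] using
    congrFun₂ (Matrix.mem_unitaryGroup_iff'.1 hS) i j

theorem submatrix_mem_unitaryGroup (hS : S ∈ Matrix.unitaryGroup n ℂ) (ι : Equiv.Perm n) :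
    S.submatrix ι id ∈ Matrix.unitaryGroup n ℂ := by
  rw [Matrix.mem_unitaryGroup_iff]
  ext a b
  simpa [Matrix.mul_apply, Matrix.one_apply] using
    sum_mul_conj_of_mem_unitaryGroup hS (ι a) (ι b)

theorem verlindeSum_self_left (hS : S ∈ Matrix.unitaryGroup n ℂ) {o : n} (ho : ∀ i, S o i ≠ 0)
    (b c : n) : verlindeSum S o o b c = if b = c then 1 else 0 := by
  rw [← sum_mul_conj_of_mem_unitaryGroup hS b c]
  refine Finset.sum_congr rfl fun i _ ↦ ?_
  field_simp [ho i]

end UnitaryMatrix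

variable {Φ : Type} [Fintype Φ] [DecidableEq Φ] {F : FusionRing Φ}

namespace FusionRing

section FusionOperator

open scoped InnerProductSpace

variable (F)

theorem N_cyclic (a b c : Φ) : F.N a b (F.star c) = F.N b c (F.star a) := by
  have hstar (d : Φ) : c = F.star d ↔ F.star c = d := by
    rw [← Function.Involutive.eq_iff F.star_involutive, eq_comm]
  simpa [F.N_one, hstar] using F.mul_assoc a b c F.one

theorem N_star_left (a b c : Φ) : F.N (F.star a) b c = F.N a c b :=
  calc F.N (F.star a) b c = F.N b (F.star c) a := by
        simpa only [F.star_involutive] using F.N_cyclic (F.star a) b (F.star c)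
    _ = F.N (F.star b) c (F.star a) := by rw [← F.star_hom, F.star_involutive]
    _ = F.N a c b := by rw [F.N_cyclic, F.star_involutive, F.mul_comm]

/-- The matrix `(N_{ab}^c)_{b,c}` of multiplication by the basis element `a`. It is the transpose of
the matrix in column convention, so that characters are eigenvectors. -/
def fusionMatrix (a : Φ) : Matrix Φ Φ ℂ :=
  Matrix.of fun b c ↦ (F.N a b c : ℂ)

theorem commute_fusionMatrix (a b : Φ) : Commute (F.fusionMatrix a) (F.fusionMatrix b) := by
  ext c e
  simp only [fusionMatrix, Matrix.mul_apply, Matrix.of_apply]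
  have h := F.mul_assoc a c b e
  simp only [F.mul_comm _ b] at h
  exact_mod_cast h

theorem conjTranspose_fusionMatrix (a : Φ) :
    (F.fusionMatrix a)ᴴ = F.fusionMatrix (F.star a) := by
  ext b c
  simp [fusionMatrix, F.N_star_left]

/-- The operator of the fusion matrix of `a` on the Hilbert space with orthonormal basis `Φ`. -/
noncomputable def fusionOperator (a : Φ) : Module.End ℂ (EuclideanSpace ℂ Φ) :=
  (F.fusionMatrix a).toEuclideanLin

@[simp]
theorem fusionOperator_apply (a : Φ) (v : EuclideanSpace ℂ Φ) (b : Φ) :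
    F.fusionOperator a v b = ∑ c, (F.N a b c : ℂ) * v c := by
  simp [fusionOperator, fusionMatrix, Matrix.mulVec, dotProduct]

theorem fusionOperator_apply_one (a : Φ) (v : EuclideanSpace ℂ Φ) :
    F.fusionOperator a v F.one = v a := by
  simp [F.mul_comm a F.one, F.one_mul, apply_ite]

theorem commute_fusionOperator (a b : Φ) : Commute (F.fusionOperator a) (F.fusionOperator b) := by
  simp only [Commute, SemiconjBy, fusionOperator, Module.End.mul_eq_comp, ← Matrix.toLpLin_mul_same,
    (F.commute_fusionMatrix a b).eq]

theorem adjoint_fusionOperator (a : Φ) :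
    LinearMap.adjoint (F.fusionOperator a) = F.fusionOperator (F.star a) := by
  rw [fusionOperator, ← Matrix.toEuclideanLin_conjTranspose_eq_adjoint, conjTranspose_fusionMatrix,
    fusionOperator]

theorem iSup_iInf_eigenspace_fusionOperator :
    ⨆ μ : Φ → ℂ, ⨅ a, Module.End.eigenspace (F.fusionOperator a) (μ a) = ⊤ :=
  iSup_iInf_eigenspace_eq_top_of_commute_star F.commute_fusionOperator fun a b ↦ by
    rw [LinearMap.star_eq_adjoint, adjoint_fusionOperator]
    exact F.commute_fusionOperator a _

end FusionOperator

variable (F) in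
/-- A complex character of the fusion ring `F`: the restriction to the basis `Φ` of a unital ring
homomorphism to `ℂ`. -/
structure Character where
  toFun : Φ → ℂ
  map_one' : toFun F.one = 1
  map_mul' : ∀ a b, toFun a * toFun b = ∑ c, (F.N a b c : ℂ) * toFun c

namespace Character

open scoped InnerProductSpace

instance : FunLike F.Character Φ ℂ where
  coe := toFun
  coe_injective χ ψ h := by cases χ; cases ψ; congr

variable (χ ψ : F.Character)

protected theorem map_one : χ F.one = 1 := χ.map_one'

protected theorem map_mul (a b : Φ) : χ a * χ b = ∑ c, (F.N a b c : ℂ) * χ c := χ.map_mul' a b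

/-- The character `χ` as a vector of the Hilbert space with orthonormal basis `Φ`. -/
def vector : EuclideanSpace ℂ Φ := WithLp.toLp 2 χ

@[simp]
theorem vector_apply (a : Φ) : χ.vector a = χ a := rfl

theorem vector_ne_zero : χ.vector ≠ 0 := fun h ↦ by
  simpa [χ.map_one] using congrArg (· F.one) h

theorem fusionOperator_vector (a : Φ) : F.fusionOperator a χ.vector = χ a • χ.vector := by
  ext b
  simp [χ.map_mul]

theorem map_mul_inner_vector (a : Φ) :
    ψ a * ⟪χ.vector, ψ.vector⟫_ℂ = conj (χ (F.star a)) * ⟪χ.vector, ψ.vector⟫_ℂ := by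
  rw [← inner_smul_right, ← inner_smul_left, ← fusionOperator_vector, ← fusionOperator_vector,
    ← adjoint_fusionOperator, LinearMap.adjoint_inner_left]

theorem map_star (a : Φ) : χ (F.star a) = conj (χ a) := by
  have h := mul_right_cancel₀ (inner_self_ne_zero.2 χ.vector_ne_zero) (map_mul_inner_vector χ χ a)
  rw [h, Complex.conj_conj]

variable {χ ψ} in
theorem inner_vector_eq_zero (h : χ ≠ ψ) : ⟪χ.vector, ψ.vector⟫_ℂ = 0 := by
  contrapose! h
  refine DFunLike.ext _ _ fun a ↦ (mul_right_cancel₀ h ?_).symm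
  rw [map_mul_inner_vector, map_star, Complex.conj_conj]

/-- If `v` is a joint eigenvector with eigenvalues `μ`, then `v a = μ a * v 1`. So if `v ≠ 0`, then
`v 1 ≠ 0` and `μ` is a character. -/
theorem iInf_eigenspace_le_span_vector (μ : Φ → ℂ) :
    ⨅ a, Module.End.eigenspace (F.fusionOperator a) (μ a) ≤
      Submodule.span ℂ (Set.range (vector : F.Character → EuclideanSpace ℂ Φ)) := by
  intro v hv
  have hμ (a : Φ) : F.fusionOperator a v = μ a • v :=
    Module.End.mem_eigenspace_iff.1 ((Submodule.mem_iInf _).1 hv a)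
  have hv_eq (a : Φ) : v a = μ a * v F.one := by rw [← F.fusionOperator_apply_one, hμ]; rfl
  by_cases hv_one : v F.one = 0
  · have : v = 0 := by ext a; simp [hv_eq a, hv_one]
    exact this ▸ Submodule.zero_mem _
  let χ : F.Character :=
    { toFun := μ
      map_one' := mul_right_cancel₀ hv_one (by rw [← hv_eq, _root_.one_mul])
      map_mul' a b := mul_right_cancel₀ hv_one <|
        calc μ a * μ b * v F.one = F.fusionOperator a v b := by
              rw [hμ, _root_.mul_assoc, ← hv_eq]; rfl
          _ = (∑ c, (F.N a b c : ℂ) * μ c) * v F.one := by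
              simp_rw [fusionOperator_apply, Finset.sum_mul, _root_.mul_assoc, ← hv_eq] }
  have hv_smul : v = v F.one • χ.vector := by
    ext a
    rw [hv_eq, _root_.mul_comm]
    rfl
  rw [hv_smul]
  exact Submodule.smul_mem _ _ (Submodule.subset_span ⟨χ, rfl⟩)

theorem span_range_vector :
    Submodule.span ℂ (Set.range (vector : F.Character → EuclideanSpace ℂ Φ)) = ⊤ := by
  rw [eq_top_iff, ← F.iSup_iInf_eigenspace_fusionOperator]
  exact iSup_le iInf_eigenspace_le_span_vector

/-- The normalized vector of the character `χ`, a column of the canonical matrix. -/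
noncomputable def unitVector : EuclideanSpace ℂ Φ := (‖χ.vector‖⁻¹ : ℂ) • χ.vector

theorem unitVector_apply (a : Φ) : χ.unitVector a = ‖χ.vector‖⁻¹ * χ a := by
  simp [unitVector]

theorem unitVector_one : χ.unitVector F.one = ‖χ.vector‖⁻¹ := by
  simp [unitVector_apply, χ.map_one]

theorem unitVector_one_pos : 0 < χ.unitVector F.one := by
  simpa [unitVector_one] using χ.vector_ne_zero

theorem unitVector_eq_mul (a : Φ) : χ.unitVector a = χ.unitVector F.one * χ a := by
  rw [unitVector_apply, unitVector_one]

variable {χ} in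
theorem unitVector_eq_of_eq_smul {v : EuclideanSpace ℂ Φ} {s : ℂ} (hv : ‖v‖ = 1) (hs : 0 < s)
    (h : v = s • χ.vector) : χ.unitVector = v := by
  rw [h, norm_smul] at hv
  rw [unitVector, h, Complex.eq_coe_norm_of_nonneg hs.le, eq_inv_of_mul_eq_one_left hv,
    Complex.ofReal_inv]

theorem fusionOperator_unitVector (a : Φ) :
    F.fusionOperator a χ.unitVector = χ a • χ.unitVector := by
  rw [unitVector, map_smul, fusionOperator_vector, smul_comm]

theorem orthonormal_unitVector : Orthonormal ℂ (unitVector : F.Character → EuclideanSpace ℂ Φ) :=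
  ⟨fun χ ↦ norm_smul_inv_norm χ.vector_ne_zero, fun χ ψ h ↦ by
    simp [unitVector, inner_smul_left, inner_smul_right, inner_vector_eq_zero h]⟩

noncomputable instance : Fintype F.Character :=
  have := orthonormal_unitVector (F := F).linearIndependent.finite
  Fintype.ofFinite _

variable (F) in
/-- The normalized characters, as an orthonormal basis of the Hilbert space with orthonormal basis
`Φ`. -/
noncomputable def orthonormalBasis : OrthonormalBasis F.Character ℂ (EuclideanSpace ℂ Φ) :=
  OrthonormalBasis.mk orthonormal_unitVector <| by
    rw [← span_range_vector (F := F), Submodule.span_le]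
    rintro _ ⟨χ, rfl⟩
    have hχ : χ.vector = (‖χ.vector‖ : ℂ) • χ.unitVector := by
      rw [unitVector, smul_inv_smul₀ (by simpa using χ.vector_ne_zero)]
    rw [hχ]
    exact Submodule.smul_mem _ _ (Submodule.subset_span ⟨χ, rfl⟩)

@[simp]
theorem orthonormalBasis_apply : orthonormalBasis F χ = χ.unitVector := by
  simp [orthonormalBasis]

theorem card_eq : Fintype.card F.Character = Fintype.card Φ := by
  rw [← Module.finrank_eq_card_basis (orthonormalBasis F).toBasis, finrank_euclideanSpace]

theorem norm_mul_le (a b : Φ) : ‖χ a‖ * ‖χ b‖ ≤ ∑ c, (F.N a b c : ℝ) * ‖χ c‖ :=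
  calc ‖χ a‖ * ‖χ b‖ = ‖∑ c, (F.N a b c : ℂ) * χ c‖ := by rw [← norm_mul, χ.map_mul]
    _ ≤ ∑ c, ‖(F.N a b c : ℂ) * χ c‖ := norm_sum_le _ _
    _ = ∑ c, (F.N a b c : ℝ) * ‖χ c‖ := by
        refine Finset.sum_congr rfl fun c _ ↦ ?_
        rw [norm_mul, Complex.norm_ratCast, abs_of_nonneg (by exact_mod_cast F.N_nonneg a b c)]

variable {χ} in
theorem pos_of_nonneg (hχ : ∀ a, 0 ≤ χ a) (a : Φ) : 0 < χ a := by
  have hN (c : Φ) : 0 ≤ (F.N a (F.star a) c : ℂ) := by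
    rw [← Complex.ofReal_ratCast]
    exact Complex.zero_le_real.2 (Rat.cast_nonneg.2 (F.N_nonneg _ _ _))
  have h : 1 ≤ χ a * χ (F.star a) :=
    calc 1 = (F.N a (F.star a) F.one : ℂ) * χ F.one := by simp [F.N_one, χ.map_one]
      _ ≤ ∑ c, (F.N a (F.star a) c : ℂ) * χ c :=
        Finset.single_le_sum (f := fun c ↦ (F.N a (F.star a) c : ℂ) * χ c)
          (fun c _ ↦ mul_nonneg (hN c) (hχ c)) (Finset.mem_univ _)
      _ = χ a * χ (F.star a) := (χ.map_mul _ _).symm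
  refine (hχ a).lt_of_ne' fun ha ↦ ?_
  rw [ha, zero_mul] at h
  exact zero_lt_one.not_ge h

theorem sum_fusionOperator_orthonormalBasis :
    (∑ a, F.fusionOperator a) (orthonormalBasis F χ) = (∑ a, χ a) • orthonormalBasis F χ := by
  simp [LinearMap.sum_apply, fusionOperator_unitVector, Finset.sum_smul]

/-- The entrywise absolute value of the character `χ`, the test vector for the Rayleigh quotient in
the Perron-Frobenius argument. -/
noncomputable def absVector : EuclideanSpace ℂ Φ := WithLp.toLp 2 fun a ↦ (‖χ a‖ : ℂ)

theorem norm_absVector_pos : 0 < ‖χ.absVector‖ := norm_pos_iff.2 fun h ↦ by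
  simpa [absVector, χ.map_one] using congrArg (· F.one) h

theorem sum_norm_mul_le_re_inner_absVector :
    (∑ a, ‖χ a‖) * ‖χ.absVector‖ ^ 2 ≤
      RCLike.re ⟪χ.absVector, (∑ a, F.fusionOperator a) χ.absVector⟫_ℂ :=
  calc (∑ a, ‖χ a‖) * ‖χ.absVector‖ ^ 2 = ∑ b, ‖χ b‖ * ∑ a, ‖χ a‖ * ‖χ b‖ := by
        simp only [EuclideanSpace.norm_sq_eq, absVector, Complex.norm_real, norm_norm,
          Finset.mul_sum, Finset.sum_mul]
        exact Finset.sum_congr rfl fun b _ ↦ Finset.sum_congr rfl fun a _ ↦ by ring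
    _ ≤ ∑ b, ‖χ b‖ * ∑ a, ∑ c, (F.N a b c : ℝ) * ‖χ c‖ := by
        gcongr with b _ a _
        exact χ.norm_mul_le a b
    _ = RCLike.re ⟪χ.absVector, (∑ a, F.fusionOperator a) χ.absVector⟫_ℂ := by
        simp only [PiLp.inner_apply, LinearMap.sum_apply, absVector, WithLp.ofLp_sum,
          Finset.sum_apply, fusionOperator_apply, map_sum]
        norm_cast
        simp [_root_.mul_comm]

theorem nonneg_of_sum_norm_le (h : ∑ a, ‖χ a‖ ≤ (∑ a, χ a).re) (a : Φ) : 0 ≤ χ a := by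
  have hle (a : Φ) : (χ a).re ≤ ‖χ a‖ := Complex.re_le_norm _
  rw [Complex.re_sum] at h
  have heq := (Finset.sum_eq_sum_iff_of_le fun a _ ↦ hle a).1
    (le_antisymm (Finset.sum_le_sum fun a _ ↦ hle a) h)
  exact Complex.re_eq_norm.1 (heq a (Finset.mem_univ a))

variable (F) in
/-- Take the character `χ` maximizing `Re ∑ a, χ a`. The Rayleigh quotient of multiplication by
`∑ a, a` at `|χ|` is at least `∑ a, |χ a|` and at most `Re ∑ a, χ a`, so every `χ a` equals
`|χ a|`. -/
theorem exists_forall_pos : ∃ χ : F.Character, ∀ a, 0 < χ a := by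
  have : Nonempty F.Character := Fintype.card_pos_iff.1 <| by
    rw [card_eq]
    exact Fintype.card_pos_iff.2 ⟨F.one⟩
  obtain ⟨χ, hχ⟩ := Finite.exists_max fun χ : F.Character ↦ (∑ a, χ a).re
  have hle := (sum_norm_mul_le_re_inner_absVector χ).trans
    (re_inner_map_self_le_of_eigenbasis _ sum_fusionOperator_orthonormalBasis hχ _)
  exact ⟨χ, pos_of_nonneg <| nonneg_of_sum_norm_le χ <|
    le_of_mul_le_mul_right hle (pow_pos χ.norm_absVector_pos 2)⟩

end Character

/-- The matrix whose columns are the normalized characters, in the order given by `e`. It is the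
canonical matrix `S` of the fusion ring if the first character is positive. -/
noncomputable def characterTable (e : Φ ≃ F.Character) : Matrix Φ Φ ℂ :=
  Matrix.of fun a i ↦ (e i).unitVector a

@[simp]
theorem characterTable_apply (e : Φ ≃ F.Character) (a i : Φ) :
    characterTable e a i = (e i).unitVector a := rfl

theorem characterTable_mem_unitaryGroup (e : Φ ≃ F.Character) :
    characterTable e ∈ Matrix.unitaryGroup Φ ℂ := by
  have h := (EuclideanSpace.basisFun Φ ℂ).toMatrix_orthonormalBasis_mem_unitary
    ((Character.orthonormalBasis F).reindex e.symm)
  convert h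
  ext a i
  simp [Module.Basis.toMatrix_apply]

theorem verlindeSum_characterTable (e : Φ ≃ F.Character) (a b c : Φ) :
    verlindeSum (characterTable e) F.one a b c = F.N a b c := by
  have hi (i : Φ) : characterTable e a i * characterTable e b i / characterTable e F.one i =
      ∑ d, (F.N a b d : ℂ) * characterTable e d i := by
    have h := congrArg (· b) ((e i).fusionOperator_unitVector a)
    have hne := (e i).unitVector_one_pos.ne'
    simp only [fusionOperator_apply, PiLp.smul_apply, smul_eq_mul] at h
    simp only [characterTable_apply, h]
    rw [(e i).unitVector_eq_mul a]
    field_simp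
  calc verlindeSum (characterTable e) F.one a b c
      = ∑ i, (∑ d, (F.N a b d : ℂ) * characterTable e d i) * conj (characterTable e c i) :=
        Finset.sum_congr rfl fun i _ ↦ by rw [← hi, mul_div_right_comm]
    _ = ∑ d, (F.N a b d : ℂ) * ∑ i, characterTable e d i * conj (characterTable e c i) := by
        simp_rw [Finset.sum_mul, Finset.mul_sum, _root_.mul_assoc]
        exact Finset.sum_comm
    _ = F.N a b c := by
        simp only [sum_mul_conj_of_mem_unitaryGroup (characterTable_mem_unitaryGroup e),
          mul_ite, _root_.mul_one, mul_zero, Finset.sum_ite_eq', Finset.mem_univ, if_true]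

section ColumnCharacter

variable {S : Matrix Φ Φ ℂ} (hS : S ∈ Matrix.unitaryGroup Φ ℂ) (hpos : ∀ i, 0 < S F.one i)
  (hV : ∀ a b c, verlindeSum S F.one a b c = F.N a b c)

include hS hV in
theorem sum_N_mul_column (a b i : Φ) :
    ∑ c, (F.N a b c : ℂ) * S c i = S a i * S b i / S F.one i :=
  calc ∑ c, (F.N a b c : ℂ) * S c i
      = ∑ j, S a j * S b j / S F.one j * ∑ c, conj (S c j) * S c i := by
        simp_rw [← hV, verlindeSum, Finset.mul_sum, Finset.sum_mul]
        rw [Finset.sum_comm]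
        exact Finset.sum_congr rfl fun j _ ↦ Finset.sum_congr rfl fun c _ ↦ by ring
    _ = S a i * S b i / S F.one i := by simp [sum_conj_mul_of_mem_unitaryGroup hS]

/-- The character by which multiplication acts on the `i`-th column of a unitary matrix satisfying
Verlinde's formula. -/
noncomputable def columnCharacter (i : Φ) : F.Character where
  toFun a := S a i / S F.one i
  map_one' := div_self (hpos i).ne'
  map_mul' a b := by
    simp_rw [← mul_div_assoc, ← Finset.sum_div, sum_N_mul_column hS hV]
    ring

theorem unitVector_columnCharacter (i : Φ) :
    (columnCharacter hS hpos hV i).unitVector = WithLp.toLp 2 (S.col i) := by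
  refine Character.unitVector_eq_of_eq_smul ?_ (hpos i) ?_
  · have hsum : ((∑ a, ‖S a i‖ ^ 2 : ℝ) : ℂ) = 1 := by
      simpa [Complex.conj_mul'] using sum_conj_mul_of_mem_unitaryGroup hS i i
    rw [EuclideanSpace.norm_eq, Real.sqrt_eq_one]
    exact_mod_cast hsum
  · ext a
    exact (mul_div_cancel₀ _ (hpos i).ne').symm

theorem bijective_columnCharacter : Function.Bijective (columnCharacter hS hpos hV) := by
  refine (Fintype.bijective_iff_injective_and_card _).2 ⟨fun i j hij ↦ ?_, Character.card_eq.symm⟩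
  have hcol : S.col i = S.col j := by
    simpa [unitVector_columnCharacter] using congrArg Character.unitVector hij
  by_contra hne
  refine one_ne_zero (α := ℂ) ?_
  calc (1 : ℂ) = ∑ a, conj (S a i) * S a i := by simp [sum_conj_mul_of_mem_unitaryGroup hS]
    _ = ∑ a, conj (S a i) * S a j :=
        Finset.sum_congr rfl fun a _ ↦ congrArg _ (congrFun hcol a)
    _ = 0 := by simp [sum_conj_mul_of_mem_unitaryGroup hS, hne]

end ColumnCharacter

theorem exists_eq_characterTable_iff {S : Matrix Φ Φ ℂ} :
    (∃ e : Φ ≃ F.Character, S = characterTable e) ↔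
      S ∈ Matrix.unitaryGroup Φ ℂ ∧ (∀ i, 0 < S F.one i) ∧
        ∀ a b c, verlindeSum S F.one a b c = F.N a b c := by
  constructor
  · rintro ⟨e, rfl⟩
    exact ⟨characterTable_mem_unitaryGroup e, fun i ↦ (e i).unitVector_one_pos,
      verlindeSum_characterTable e⟩
  · rintro ⟨hS, hpos, hV⟩
    refine ⟨Equiv.ofBijective _ (bijective_columnCharacter hS hpos hV), ?_⟩
    ext a i
    simp [unitVector_columnCharacter]

end FusionRing

open FusionRing

theorem isCanonicalS_iff {S : Matrix Φ Φ ℂ} :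
    IsCanonicalS F S ↔ S ∈ Matrix.unitaryGroup Φ ℂ ∧ (∀ i, 0 < S F.one i) ∧
      (∀ a, 0 < S a F.one) ∧ ∀ a b c, verlindeSum S F.one a b c = F.N a b c := by
  simp only [IsCanonicalS, Matrix.mem_unitaryGroup_iff, Matrix.star_eq_conjTranspose,
    Complex.pos_iff, verlindeSum, eq_comm, and_comm]

theorem isCanonicalS_iff_exists_eq_characterTable {S : Matrix Φ Φ ℂ} :
    IsCanonicalS F S ↔
      ∃ e : Φ ≃ F.Character, (∀ a, 0 < e F.one a) ∧ S = characterTable e := by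
  have hpos (e : Φ ≃ F.Character) (a : Φ) : 0 < characterTable e a F.one ↔ 0 < e F.one a := by
    rw [characterTable_apply, Character.unitVector_eq_mul]
    exact mul_pos_iff_of_pos_left (e F.one).unitVector_one_pos
  rw [isCanonicalS_iff]
  constructor
  · rintro ⟨hU, hrow, hcol, hV⟩
    obtain ⟨e, rfl⟩ := exists_eq_characterTable_iff.2 ⟨hU, hrow, hV⟩
    exact ⟨e, fun a ↦ (hpos e a).1 (hcol a), rfl⟩
  · rintro ⟨e, he, rfl⟩
    obtain ⟨hU, hrow, hV⟩ := exists_eq_characterTable_iff.1 ⟨e, rfl⟩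
    exact ⟨hU, hrow, fun a ↦ (hpos e a).2 (he a), hV⟩

theorem exists_isCanonicalS (F : FusionRing Φ) : ∃ S : Matrix Φ Φ ℂ, IsCanonicalS F S := by
  obtain ⟨χ, hχ⟩ := Character.exists_forall_pos F
  let e := Fintype.equivOfCardEq (Character.card_eq (F := F)).symm
  exact ⟨_, isCanonicalS_iff_exists_eq_characterTable.2
    ⟨(Equiv.swap F.one (e.symm χ)).trans e, by simpa using hχ, rfl⟩⟩

namespace IsCanonicalS

variable {S S' : Matrix Φ Φ ℂ}

theorem exists_perm (hS : IsCanonicalS F S) (hS' : IsCanonicalS F S') :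
    ∃ σ : Equiv.Perm Φ, ∀ a i, S' a i = S a (σ i) := by
  obtain ⟨e, -, rfl⟩ := isCanonicalS_iff_exists_eq_characterTable.1 hS
  obtain ⟨e', -, rfl⟩ := isCanonicalS_iff_exists_eq_characterTable.1 hS'
  exact ⟨e'.trans e.symm, by simp⟩

theorem map_one_of_verlindeSum_transpose (hS : IsCanonicalS F S) {ι : Equiv.Perm Φ}
    (hι : ∀ a b c, verlindeSum Sᵀ F.one (ι a) (ι b) (ι c) = F.N a b c) : ι F.one = F.one := by
  obtain ⟨hU, -, hcol, -⟩ := isCanonicalS_iff.1 hS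
  have h := verlindeSum_self_left (Matrix.transpose_mem_unitaryGroup_iff.2 hU)
    (fun i ↦ (hcol i).ne') (ι F.one) (ι F.one)
  have h' := hι (ι.symm F.one) F.one F.one
  rw [ι.apply_symm_apply, h, F.mul_comm, F.one_mul] at h'
  by_contra hne
  simp [Equiv.symm_apply_eq, Ne.symm hne] at h'

theorem map_one_of_forall_apply_eq (hS : IsCanonicalS F S) {ι : Φ → Φ} {ι' : Φ → Φ}
    (h : ∀ a b, S a (ι' b) = S b (ι a)) : ι F.one = F.one := by
  obtain ⟨hU, hrow, hcol, -⟩ := isCanonicalS_iff.1 hS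
  have hpos : 0 < ∑ x, conj (S x F.one) * S x (ι F.one) := by
    refine Finset.sum_pos (fun x _ ↦ ?_) ⟨F.one, Finset.mem_univ _⟩
    rw [← h]
    exact mul_pos (star_pos_iff.2 (hcol x)) (hrow _)
  by_contra hne
  simp [sum_conj_mul_of_mem_unitaryGroup hU, Ne.symm hne] at hpos

theorem transpose_reindex (hS : IsCanonicalS F S) {ι : Equiv.Perm Φ}
    (hι : ∀ a b c, verlindeSum Sᵀ F.one (ι a) (ι b) (ι c) = F.N a b c) :
    IsCanonicalS F (Sᵀ.submatrix ι id) := by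
  have hone := hS.map_one_of_verlindeSum_transpose hι
  obtain ⟨hU, hrow, hcol, -⟩ := isCanonicalS_iff.1 hS
  have hU' := submatrix_mem_unitaryGroup (Matrix.transpose_mem_unitaryGroup_iff.2 hU) ι
  refine isCanonicalS_iff.2 ⟨hU', by simpa [hone] using hcol, fun a ↦ hrow (ι a), fun a b c ↦ ?_⟩
  simp [← hι, verlindeSum, hone]

theorem selfdual_iff (hS : IsCanonicalS F S) :
    (∃ ι : Equiv.Perm Φ, ∀ a b c, (F.N a b c : ℂ) = verlindeSum Sᵀ F.one (ι a) (ι b) (ι c)) ↔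
      ∃ ι ι' : Equiv.Perm Φ, ∀ a b, S a (ι' b) = S b (ι a) := by
  constructor
  · rintro ⟨ι, hι⟩
    obtain ⟨σ, hσ⟩ := hS.exists_perm (hS.transpose_reindex fun a b c ↦ (hι a b c).symm)
    exact ⟨ι, σ, fun a b ↦ (hσ a b).symm⟩
  · rintro ⟨ι, ι', h⟩
    have hone := hS.map_one_of_forall_apply_eq h
    obtain ⟨-, -, -, hV⟩ := isCanonicalS_iff.1 hS
    refine ⟨ι, fun a b c ↦ ?_⟩
    rw [← hV, verlindeSum, ← Equiv.sum_comp ι']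
    simp only [verlindeSum, Matrix.transpose_apply, h, hone]

end IsCanonicalS

/-- Every fusion ring admits a canonical unitary matrix `S` with positive
`one`-row and `one`-column satisfying Verlinde's formula; `S` is unique up to a permutation of
its columns; and the fusion ring is self-dual (its dual structure constants
`N̂ i j k = ∑_a S a i · S a j · conj (S a k) / S a one` agree with `N` under some bijection)
if and only if there are bijections `ι, ι'` of `Φ` with `S a (ι' b) = S b (ι a)` for all `a, b`. -/
theorem fusionRing_canonical_S_and_selfdual_iff
    {Φ : Type} [Fintype Φ] [DecidableEq Φ] (F : FusionRing Φ) :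
    ∃ S : Matrix Φ Φ ℂ, IsCanonicalS F S ∧
      (∀ S' : Matrix Φ Φ ℂ, IsCanonicalS F S' →
        ∃ σ : Equiv.Perm Φ, ∀ a i, S' a i = S a (σ i)) ∧
      ((∃ ι : Equiv.Perm Φ, ∀ a b c, (F.N a b c : ℂ) =
          ∑ x, S x (ι a) * S x (ι b) * (starRingEnd ℂ) (S x (ι c)) / S x F.one) ↔
        (∃ ι ι' : Equiv.Perm Φ, ∀ a b, S a (ι' b) = S b (ι a))) := by
  obtain ⟨S, hS⟩ := exists_isCanonicalS F
  exact ⟨S, hS, fun _ ↦ hS.exists_perm, hS.selfdual_iff⟩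
end

section
/- Let R be a fusion ring on basis Φ (with |Φ| = n) whose associated ℚ-algebra is isomorphic to a field. Then there exist: a number field 𝕃 ⊆ ℂ that is normal over ℚ and stable under complex conjugation, with complex conjugation commuting with every field embedding of 𝕃 into ℂ; a totally positive element α ∈ 𝕃 with Tr_{𝕃/ℚ}(|α|²) = 1; a subfield K ⊆ 𝕃 with [K:ℚ] = n; and a ℚ-algebra isomorphism θ from R onto K with θ(1) = 1 and θ(a*) = conj(θ(a)) for all a ∈ Φ, such that Tr_{𝕃/ℚ}(|α|² θ(a) conj(θ(b))) = δ_{a,b} for all a, b ∈ Φ. In particular the structure constants are realised by multiplication in K: N_{ab}^c = Tr_{𝕃/ℚ}(|α|² θ(a) θ(b) conj(θ(c))) for all a, b, c ∈ Φ. -/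
open scoped BigOperators
open Complex

/-- The product on the associated `ℚ`-algebra (the free `ℚ`-vector space on `Φ`, realised as
`Φ → ℚ`) of a fusion ring. -/
def fusionMul {Φ : Type} [Fintype Φ] [DecidableEq Φ] (F : FusionRing Φ) (x y : Φ → ℚ) :
    Φ → ℚ :=
  fun c => ∑ a, ∑ b, x a * y b * F.N a b c

/-!
Embed the field in `ℂ` as `K`, and let `D = ∑ t_a t_{a*}` be the formal codegree. Every character
of a fusion ring sends `a*` to the conjugate of the image of `a`, so `D` is totally positive, and
`Tr_{K/ℚ}(t_a t_b t_{c*} D⁻¹) = N_{ab}^c`. It therefore suffices to write a totally positive `x`,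
here `x = D⁻¹`, as `Tr_{L/K}(α²)` with `α` totally positive in a normal extension `L` of `K` on
which complex conjugation is central.

By approximating `√x` by rational polynomials in `x` at all embeddings at once, `x = c² + r²` with
`c` totally positive in `K` and `r` totally real and small compared with `c`. Let `p` be a large
prime and `w₁, w₂, …` the real periods `ζ^k + ζ^{-k}` of a primitive `p²`-th root of unity `ζ`;
over `M = K(r)` they are trace-orthogonal to each other and to `1`. Hence `α = a c + ∑ b_i c w_i +
∑ b'_i r w'_i`, with rational coefficients, satisfies `Tr_{L/M}(α²) = [L:M] ((a² + 2 ∑ b_i²) c² +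
2 (∑ b'_i²) r²)`. Lagrange's four-square theorem makes the two coefficients equal to any
prescribed positive rational, with the `b_i` small relative to `a`; then the term `a c` dominates
and `α` is totally positive.
-/

section TotallyPositive

open scoped ComplexOrder

variable {K : Type*} [Field K] [Algebra ℚ K]

/-- Total positivity of `x` relative to the field `K` containing it: every embedding of `K` into `ℂ`
sends `x` to a positive real number, in the order of `ℂ` in which `0 < z` forces `z` to be real. -/
def IsTotallyPositive (x : K) : Prop :=
  ∀ g : K →ₐ[ℚ] ℂ, 0 < g x

lemma IsTotallyPositive.ne_zero [Algebra.IsAlgebraic ℚ K] {x : K} (hx : IsTotallyPositive x) :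
    x ≠ 0 := by
  rintro rfl
  exact (hx IsAlgClosed.lift).ne' (map_zero _)

lemma IsTotallyPositive.inv {x : K} (hx : IsTotallyPositive x) : IsTotallyPositive x⁻¹ :=
  fun g => by simpa using hx g

lemma isSelfAdjoint_of_sq_nonneg {z : ℂ} (hz : 0 ≤ z ^ 2) : IsSelfAdjoint z := by
  obtain ⟨hre, him⟩ := Complex.nonneg_iff.1 hz
  rw [pow_two, Complex.mul_im] at him
  rw [pow_two, Complex.mul_re] at hre
  refine Complex.conj_eq_iff_im.2 ?_
  by_contra h
  have : z.re = 0 := by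
    apply mul_left_cancel₀ h
    linarith
  rw [this] at hre
  nlinarith [mul_self_pos.2 h]

lemma pos_of_norm_sub_lt {z w : ℂ} (hz : IsSelfAdjoint z) (hw : 0 < w) (h : ‖z - w‖ < ‖w‖) :
    0 < z := by
  refine Complex.pos_iff.2 ⟨?_, (Complex.conj_eq_iff_im.1 hz).symm⟩
  rw [← Complex.re_eq_norm.2 hw.le] at h
  have := (abs_lt.1 ((Complex.abs_re_le_norm _).trans_lt h)).1
  rw [Complex.sub_re] at this
  linarith

open Polynomial in
lemma denseRange_aeval_rat {ι : Type*} [Finite ι] {x : ι → ℝ} (hx : Function.Injective x) :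
    DenseRange fun (P : ℚ[X]) (i : ι) => aeval (x i) P := by
  classical
  have := Fintype.ofFinite ι
  let evalCoeffs (a : Fin (Fintype.card ι) → ℝ) (i : ι) : ℝ := ∑ k, a k * x i ^ (k : ℕ)
  have surjective_evalCoeffs : Function.Surjective evalCoeffs := by
    intro v
    let P := Lagrange.interpolate Finset.univ x v
    have hP : P.degree < Fintype.card ι := Lagrange.degree_interpolate_lt v hx.injOn
    refine ⟨fun k => P.coeff k, funext fun i => ?_⟩
    calc ∑ k : Fin (Fintype.card ι), P.coeff k * x i ^ (k : ℕ)
        = P.eval (x i) := by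
          rw [eval_eq_sum, ← sum_fin (fun k a => a * x i ^ k) (by simp) hP]
      _ = v i := Lagrange.eval_interpolate_at_node v hx.injOn (Finset.mem_univ i)
  have continuous_evalCoeffs : Continuous evalCoeffs := by fun_prop
  refine (surjective_evalCoeffs.denseRange.comp (DenseRange.piMap fun _ => Rat.denseRange_cast)
    continuous_evalCoeffs).mono ?_
  rintro _ ⟨q, rfl⟩
  exact ⟨∑ k, C (q k) * X ^ (k : ℕ), by ext i; simp [evalCoeffs]⟩

lemma exists_rat_aeval_sq_near {S : Set ℝ} [Finite S] (hS : ∀ s ∈ S, 0 < s) {ε : ℝ} (hε : 0 < ε) :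
    ∃ P : Polynomial ℚ, ∀ s ∈ S, 0 < Polynomial.aeval s P ∧ Polynomial.aeval s P ^ 2 ≤ s ∧
      s - Polynomial.aeval s P ^ 2 ≤ ε * Polynomial.aeval s P ^ 2 := by
  have := Fintype.ofFinite S
  let U : Set (S → ℝ) := {v | ∀ s, 0 < v s ∧ v s ^ 2 < s ∧ s - v s ^ 2 < ε * v s ^ 2}
  have hU : IsOpen U := by
    simp only [U, Set.ofPred_forall, Set.ofPred_and]
    refine isOpen_iInter_of_finite fun s => IsOpen.inter ?_ (IsOpen.inter ?_ ?_) <;>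
      exact isOpen_lt (by fun_prop) (by fun_prop)
  have hne : U.Nonempty := by
    refine ⟨fun s => √(s / (1 + ε / 2)), fun s => ?_⟩
    have hs := hS s s.2
    have hq : 0 < s / (1 + ε / 2) := by positivity
    rw [Real.sq_sqrt hq.le]
    have hmul : s / (1 + ε / 2) * (1 + ε / 2) = s := by field_simp
    exact ⟨Real.sqrt_pos.2 hq, by nlinarith, by nlinarith⟩
  obtain ⟨P, hP⟩ := (denseRange_aeval_rat Subtype.val_injective).exists_mem_open hU hne
  exact ⟨P, fun s hs => (hP ⟨s, hs⟩).imp_right (And.imp le_of_lt le_of_lt)⟩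

lemma IsTotallyPositive.exists_sq_near [FiniteDimensional ℚ K] {x : K} (hx : IsTotallyPositive x)
    {ε : ℝ} (hε : 0 < ε) :
    ∃ c : K, IsTotallyPositive c ∧
      ∀ g : K →ₐ[ℚ] ℂ, 0 ≤ g (x - c ^ 2) ∧ ‖g (x - c ^ 2)‖ ≤ ε * ‖g c‖ ^ 2 := by
  obtain ⟨P, hP⟩ := exists_rat_aeval_sq_near (S := Set.range fun g : K →ₐ[ℚ] ℂ => (g x).re)
    (by rintro _ ⟨g, rfl⟩; exact (Complex.pos_iff.1 (hx g)).1) hε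
  let c := Polynomial.aeval x P
  let v (g : K →ₐ[ℚ] ℂ) : ℝ := Polynomial.aeval (g x).re P
  have hgx (g : K →ₐ[ℚ] ℂ) : g x = ((g x).re : ℂ) :=
    Complex.ext rfl (Complex.pos_iff.1 (hx g)).2.symm
  have hgc (g : K →ₐ[ℚ] ℂ) : g c = (v g : ℂ) := by
    calc g c = Polynomial.aeval (g x) P := (Polynomial.aeval_algHom_apply g x P).symm
      _ = Polynomial.aeval (algebraMap ℝ ℂ (g x).re) P := by rw [hgx g]; rfl
      _ = v g := Polynomial.aeval_algebraMap_apply ℂ _ P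
  refine ⟨c, fun g => ?_, fun g => ?_⟩ <;>
    obtain ⟨hpos, hle, hnear⟩ := hP _ ⟨g, rfl⟩
  · rw [hgc]
    exact_mod_cast hpos
  · have hsub : g (x - c ^ 2) = (((g x).re - v g ^ 2 : ℝ) : ℂ) := by
      rw [map_sub, map_pow, hgc, hgx g]
      push_cast
      rfl
    have hnonneg : 0 ≤ (g x).re - v g ^ 2 := sub_nonneg.2 hle
    rw [hsub, hgc, Complex.norm_of_nonneg hnonneg, Complex.norm_real, Real.norm_eq_abs, sq_abs]
    exact ⟨by exact_mod_cast hnonneg, hnear⟩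

end TotallyPositive

section RationalSquares

lemma exists_sum_four_sq_eq_rat {q : ℚ} (hq : 0 ≤ q) : ∃ b : Fin 4 → ℚ, ∑ i, b i ^ 2 = q := by
  obtain ⟨a, b, c, d, h⟩ := Nat.sum_four_squares (q.num.toNat * q.den)
  have hsum : (a ^ 2 + b ^ 2 + c ^ 2 + d ^ 2 : ℚ) = q.num * q.den := by
    rw [← Int.toNat_of_nonneg (Rat.num_nonneg.2 hq)]
    exact_mod_cast h
  refine ⟨fun i => ![(a : ℚ), b, c, d] i / q.den, ?_⟩
  calc ∑ i, (![(a : ℚ), b, c, d] i / q.den) ^ 2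
      = (a ^ 2 + b ^ 2 + c ^ 2 + d ^ 2) / q.den ^ 2 := by
        simp [Fin.sum_univ_four, div_pow, add_div]
    _ = q.num / q.den := by rw [hsum]; field_simp
    _ = q := q.num_div_den

lemma exists_two_mul_sum_four_sq_eq_rat {q : ℚ} (hq : 0 ≤ q) :
    ∃ b : Fin 4 → ℚ, 2 * ∑ i, b i ^ 2 = q ∧ (∑ i, |b i|) ^ 2 ≤ 2 * q := by
  obtain ⟨b, hb⟩ := exists_sum_four_sq_eq_rat (div_nonneg hq zero_le_two)
  have cauchy_schwarz := sq_sum_le_card_mul_sum_sq (s := (Finset.univ : Finset (Fin 4)))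
    (f := fun i => |b i|)
  simp only [sq_abs, hb, Finset.card_univ, Fintype.card_fin, Nat.cast_ofNat] at cauchy_schwarz
  exact ⟨b, by rw [hb]; ring, cauchy_schwarz.trans_eq (by ring)⟩

-- Choosing `a ^ 2` just below `q` makes the `b i` small; the `b' i` are not small, but they are the
-- coefficients of an element `r` that is at most one eighth of `c` under every embedding.
lemma exists_rat_weights {q : ℚ} (hq : 0 < q) :
    ∃ (a : ℚ) (b b' : Fin 4 → ℚ), 0 < a ∧ a ^ 2 + 2 * ∑ i, b i ^ 2 = q ∧
      2 * ∑ i, b' i ^ 2 = q ∧ ∑ i, |b i| + (∑ i, |b' i|) / 8 < a / 2 := by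
  obtain ⟨a, ha, hlt, hlt'⟩ := exists_rat_pow_btwn two_ne_zero
    (show 32 / 33 * q < q by linarith) hq
  rw [Rat.cast_id] at hlt hlt'
  obtain ⟨b, hb, hb_le⟩ := exists_two_mul_sum_four_sq_eq_rat (sub_nonneg.2 hlt'.le)
  obtain ⟨b', hb', hb'_le⟩ := exists_two_mul_sum_four_sq_eq_rat hq.le
  have hsum : ∑ i, |b i| ≤ a / 4 := (abs_le_of_sq_le_sq' (by nlinarith) (by positivity)).2
  have hsum' : ∑ i, |b' i| ≤ 3 * a / 2 := (abs_le_of_sq_le_sq' (by nlinarith) (by positivity)).2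
  exact ⟨a, b, b', ha, by linarith, hb', by linarith⟩

end RationalSquares

section CyclotomicTraces

open IntermediateField

lemma trace_eq_zero_of_pow_prime_eq_algebraMap {F L : Type*} [Field F] [Field L] [Algebra F L]
    [FiniteDimensional F L] {p : ℕ} (hp : p.Prime) {x : L} {a : F}
    (hx : x ^ p = algebraMap F L a) (ha : ∀ b : F, b ^ p ≠ a) : Algebra.trace F L x = 0 := by
  have hmin : Polynomial.X ^ p - Polynomial.C a = minpoly F x :=
    minpoly.eq_of_irreducible_of_monic (X_pow_sub_C_irreducible_of_prime hp ha) (by simp [hx])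
      (Polynomial.monic_X_pow_sub_C a hp.ne_zero)
  have hne : p - 1 ≠ p := (Nat.sub_lt hp.pos one_pos).ne
  have hne' : p - 1 ≠ 0 := (Nat.sub_pos_of_lt hp.one_lt).ne'
  rw [trace_eq_finrank_mul_minpoly_nextCoeff, ← hmin,
    Polynomial.nextCoeff_of_natDegree_pos (by simp [hp.pos]), Polynomial.natDegree_X_pow_sub_C,
    Polynomial.coeff_sub, Polynomial.coeff_X_pow, Polynomial.coeff_C, if_neg hne, if_neg hne']
  simp

lemma totient_dvd_finrank_of_isPrimitiveRoot {L : Type*} [Field L] [Algebra ℚ L]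
    [FiniteDimensional ℚ L] {n : ℕ} (hn : 0 < n) {ζ : L} (hζ : IsPrimitiveRoot ζ n) :
    n.totient ∣ Module.finrank ℚ L := by
  have : CharZero L := algebraRat.charZero L
  have := NeZero.of_pos hn
  rw [← Polynomial.natDegree_cyclotomic n ℚ,
    hζ.minpoly_eq_cyclotomic_of_irreducible (Polynomial.cyclotomic.irreducible_rat hn)]
  exact minpoly.degree_dvd (IsIntegral.of_finite ℚ ζ)

lemma finrank_adjoin_le_totient_of_isPrimitiveRoot {F L : Type*} [Field F] [Field L] [Algebra F L]
    {n : ℕ} (hn : 0 < n) {ζ : L} (hζ : IsPrimitiveRoot ζ n) :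
    Module.finrank F F⟮ζ⟯ ≤ n.totient := by
  rw [adjoin.finrank ⟨_, Polynomial.monic_X_pow_sub_C 1 hn.ne', by simp [hζ.pow_eq_one]⟩,
    ← Polynomial.natDegree_cyclotomic n F]
  refine Polynomial.natDegree_le_of_dvd (minpoly.dvd _ _ ?_) (Polynomial.cyclotomic_ne_zero n F)
  rw [Polynomial.aeval_def, ← Polynomial.eval_map, Polynomial.map_cyclotomic]
  exact hζ.isRoot_cyclotomic hn

variable {M L : Type*} [Field M] [Field L] [Algebra ℚ M] [Algebra ℚ L] [Algebra M L]
  [FiniteDimensional ℚ M] [FiniteDimensional ℚ L]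

lemma trace_eq_zero_of_isPrimitiveRoot_prime_sq {p : ℕ} (hp : p.Prime)
    (hM : Module.finrank ℚ M < p) {ξ : L} (hξ : IsPrimitiveRoot ξ (p ^ 2)) :
    Algebra.trace M L ξ = 0 := by
  have : FiniteDimensional M L := FiniteDimensional.right ℚ M L
  have hω : IsPrimitiveRoot (ξ ^ p) p := hξ.pow (pow_pos hp.pos 2) (pow_two p)
  let F := M⟮ξ ^ p⟯
  have : FiniteDimensional ℚ F := FiniteDimensional.trans ℚ M F
  have not_dvd_finrank : ¬ p ∣ Module.finrank ℚ F := by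
    have hF : Module.finrank M F < p :=
      (finrank_adjoin_le_totient_of_isPrimitiveRoot hp.pos hω).trans_lt
        (Nat.totient_lt p hp.one_lt)
    rw [← Module.finrank_mul_finrank ℚ M F, hp.dvd_mul]
    exact not_or_intro (Nat.not_dvd_of_pos_of_lt Module.finrank_pos hM)
      (Nat.not_dvd_of_pos_of_lt Module.finrank_pos hF)
  have not_pow (b : F) : b ^ p ≠ AdjoinSimple.gen M (ξ ^ p) := by
    intro hb
    have hgen : IsPrimitiveRoot (AdjoinSimple.gen M (ξ ^ p)) p :=
      hω.of_map_of_injective (f := algebraMap F L) (algebraMap F L).injective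
    have hb' : IsPrimitiveRoot b (p ^ (1 + 1)) := by
      have := Fact.mk hp
      refine IsPrimitiveRoot.iff_orderOf.2 (orderOf_eq_prime_pow ?_ ?_)
      · rw [pow_one, hb]
        exact hgen.ne_one hp.one_lt
      · rw [pow_succ, pow_one, pow_mul, hb, hgen.pow_eq_one]
    have hdvd := totient_dvd_finrank_of_isPrimitiveRoot (pow_pos hp.pos _) hb'
    rw [Nat.totient_prime_pow_succ hp, pow_one] at hdvd
    exact not_dvd_finrank ((dvd_mul_right _ _).trans hdvd)
  rw [← Algebra.trace_trace (S := F), trace_eq_zero_of_pow_prime_eq_algebraMap hp rfl not_pow,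
    map_zero]

end CyclotomicTraces

section RealPeriods

open scoped ComplexConjugate

variable {L : Type*} [Field L]

/-- The period `ζ ^ k + ζ⁻¹ ^ k`, which is totally real when `ζ` is a root of unity. -/
def realPeriod (ζ : L) (k : ℤ) : L := ζ ^ k + ζ ^ (-k)

lemma realPeriod_zero (ζ : L) : realPeriod ζ 0 = 2 := by
  rw [realPeriod, neg_zero, zpow_zero, one_add_one_eq_two]

lemma realPeriod_mul_realPeriod {ζ : L} (hζ : ζ ≠ 0) (k l : ℤ) :
    realPeriod ζ k * realPeriod ζ l = realPeriod ζ (k + l) + realPeriod ζ (k - l) := by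
  simp only [realPeriod, neg_add, sub_eq_add_neg, zpow_add₀ hζ, neg_neg]
  ring

variable [Algebra ℚ L] {n : ℕ} {ζ : L}

lemma map_realPeriod (hn : n ≠ 0) (hζ : IsPrimitiveRoot ζ n) (k : ℤ) (g : L →ₐ[ℚ] ℂ) :
    g (realPeriod ζ k) = g ζ ^ k + conj (g ζ ^ k) := by
  have hnorm : ‖g ζ‖ = 1 := (hζ.map_of_injective (f := g) g.injective).norm'_eq_one hn
  rw [realPeriod, map_add, map_zpow₀, map_zpow₀, zpow_neg,
    Complex.inv_eq_conj (by rw [norm_zpow, hnorm, one_zpow])]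

lemma isSelfAdjoint_map_realPeriod (hn : n ≠ 0) (hζ : IsPrimitiveRoot ζ n) (k : ℤ)
    (g : L →ₐ[ℚ] ℂ) : IsSelfAdjoint (g (realPeriod ζ k)) := by
  rw [map_realPeriod hn hζ]
  exact IsSelfAdjoint.add_star_self (g ζ ^ k)

lemma norm_map_realPeriod_le (hn : n ≠ 0) (hζ : IsPrimitiveRoot ζ n) (k : ℤ) (g : L →ₐ[ℚ] ℂ) :
    ‖g (realPeriod ζ k)‖ ≤ 2 := by
  have hnorm : ‖g ζ‖ = 1 := (hζ.map_of_injective (f := g) g.injective).norm'_eq_one hn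
  have hnorm_zpow : ‖g ζ ^ k‖ = 1 := by rw [norm_zpow, hnorm, one_zpow]
  rw [map_realPeriod hn hζ]
  refine (norm_add_le _ _).trans_eq ?_
  rw [RCLike.norm_conj, hnorm_zpow, one_add_one_eq_two]

variable {M : Type*} [Field M] [Algebra ℚ M] [Algebra M L] [FiniteDimensional ℚ M]
  [FiniteDimensional ℚ L]

lemma trace_realPeriod_eq_zero {p : ℕ} (hp : p.Prime) (hM : Module.finrank ℚ M < p)
    (hζ : IsPrimitiveRoot ζ (p ^ 2)) {k : ℤ} (hk : ¬ (p : ℤ) ∣ k) :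
    Algebra.trace M L (realPeriod ζ k) = 0 := by
  have hcop (l : ℤ) (hl : ¬ (p : ℤ) ∣ l) : l.gcd ↑(p ^ 2) = 1 := by
    rw [← Int.isCoprime_iff_gcd_eq_one, Nat.cast_pow]
    exact ((Nat.prime_iff_prime_int.1 hp).coprime_iff_not_dvd.2 hl).symm.pow_right
  rw [realPeriod, map_add,
    trace_eq_zero_of_isPrimitiveRoot_prime_sq hp hM (hζ.zpow_of_gcd_eq_one k (hcop k hk)),
    trace_eq_zero_of_isPrimitiveRoot_prime_sq hp hM
      (hζ.zpow_of_gcd_eq_one (-k) (hcop (-k) (by rwa [dvd_neg]))), add_zero]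

end RealPeriods

section TraceOrthogonal

variable {M L ι : Type*} [Field M] [Field L] [Algebra M L]

/-- A family in `L` which, together with `1`, is orthogonal for the trace form of `L` over `M`, each
member having trace norm twice that of `1`, as real periods have. -/
structure IsTraceOrthogonal (M : Type*) {L ι : Type*} [Field M] [Field L] [Algebra M L]
    (w : ι → L) : Prop where
  trace_eq_zero (i : ι) : Algebra.trace M L (w i) = 0
  trace_mul_self (i : ι) : Algebra.trace M L (w i * w i) = 2 * Module.finrank M L
  trace_mul_of_ne {i j : ι} (hij : i ≠ j) : Algebra.trace M L (w i * w j) = 0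

lemma IsTraceOrthogonal.trace_sq [Fintype ι] [FiniteDimensional M L] {w : ι → L}
    (hw : IsTraceOrthogonal M w) (m : M) (c : ι → M) :
    Algebra.trace M L ((algebraMap M L m + ∑ i, c i • w i) ^ 2) =
      Module.finrank M L * (m ^ 2 + 2 * ∑ i, c i ^ 2) := by
  have trace_sum : Algebra.trace M L (∑ i, c i • w i) = 0 := by
    simp [hw.trace_eq_zero]
  have trace_sum_mul (i : ι) :
      Algebra.trace M L (w i * ∑ j, c j • w j) = 2 * Module.finrank M L * c i := by
    simp only [Finset.mul_sum, mul_smul_comm, map_sum, map_smul, smul_eq_mul]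
    rw [Finset.sum_eq_single i (fun j _ hj => by rw [hw.trace_mul_of_ne hj.symm, mul_zero])
      (by simp), hw.trace_mul_self]
    ring
  calc Algebra.trace M L ((algebraMap M L m + ∑ i, c i • w i) ^ 2)
      = Algebra.trace M L (algebraMap M L (m ^ 2) + (2 * m) • ∑ i, c i • w i +
          ∑ i, c i • (w i * ∑ j, c j • w j)) := by
        congr 1
        simp only [← smul_mul_assoc, ← Finset.sum_mul]
        simp only [Algebra.smul_def, map_mul, map_pow, map_ofNat]
        ring
    _ = Module.finrank M L * (m ^ 2 + 2 * ∑ i, c i ^ 2) := by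
        rw [map_add, map_add, map_smul, trace_sum, smul_zero, add_zero, map_sum,
          Algebra.trace_algebraMap, nsmul_eq_mul, mul_add, Finset.mul_sum, Finset.mul_sum]
        congr 1
        refine Finset.sum_congr rfl fun i _ => ?_
        rw [map_smul, trace_sum_mul, smul_eq_mul]
        ring

variable [Algebra ℚ M] [Algebra ℚ L] [FiniteDimensional ℚ M] [FiniteDimensional ℚ L]

lemma isTraceOrthogonal_realPeriod {p : ℕ} (hp : p.Prime) (hM : Module.finrank ℚ M < p) {ζ : L}
    (hζ : IsPrimitiveRoot ζ (p ^ 2)) {k : ι → ℤ} (hk : Function.Injective k)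
    (hpos : ∀ i, 0 < k i) (hlt : ∀ i, 2 * k i < p) :
    IsTraceOrthogonal M fun i => realPeriod ζ (k i) := by
  have hζ0 : ζ ≠ 0 := hζ.ne_zero (pow_pos hp.pos 2).ne'
  have trace_eq_zero {l : ℤ} (hl : l ≠ 0) (hlp : l.natAbs < p) :
      Algebra.trace M L (realPeriod ζ l) = 0 :=
    trace_realPeriod_eq_zero hp hM hζ fun hdvd =>
      hl (Int.eq_zero_of_dvd_of_natAbs_lt_natAbs hdvd hlp)
  refine ⟨fun i => ?_, fun i => ?_, fun {i j} hij => ?_⟩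
  · have := hpos i
    have := hlt i
    exact trace_eq_zero (by omega) (by omega)
  · have := hpos i
    have := hlt i
    rw [realPeriod_mul_realPeriod hζ0, map_add, sub_self, realPeriod_zero,
      trace_eq_zero (by omega) (by omega), zero_add, ← map_ofNat (algebraMap M L) 2,
      Algebra.trace_algebraMap, nsmul_eq_mul, _root_.mul_comm]
  · have := hpos i
    have := hpos j
    have := hlt i
    have := hlt j
    have := hk.ne hij
    rw [realPeriod_mul_realPeriod hζ0, map_add, trace_eq_zero (by omega) (by omega),
      trace_eq_zero (by omega) (by omega), add_zero]

lemma exists_isTraceOrthogonal [Fintype ι] {p : ℕ} (hp : p.Prime) (hM : Module.finrank ℚ M < p)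
    (hι : 2 * Fintype.card ι < p) {ζ : L} (hζ : IsPrimitiveRoot ζ (p ^ 2)) :
    ∃ w : ι → L, IsTraceOrthogonal M w ∧
      ∀ i (g : L →ₐ[ℚ] ℂ), IsSelfAdjoint (g (w i)) ∧ ‖g (w i)‖ ≤ 2 := by
  have hn : p ^ 2 ≠ 0 := (pow_pos hp.pos 2).ne'
  refine ⟨fun i => realPeriod ζ (Fintype.equivFin ι i + 1), isTraceOrthogonal_realPeriod hp hM hζ
    (fun i j hij => (Fintype.equivFin ι).injective (Fin.ext (by simpa using hij)))
    (fun i => by positivity) (fun i => ?_), fun i g =>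
    ⟨isSelfAdjoint_map_realPeriod hn hζ _ g, norm_map_realPeriod_le hn hζ _ g⟩⟩
  have := (Fintype.equivFin ι i).2
  omega

end TraceOrthogonal

section TraceOfSquare

open scoped ComplexOrder

variable {M L ι : Type*} [Field M] [Field L] [Algebra ℚ M] [Algebra ℚ L] [Algebra M L]

lemma isTotallyPositive_algebraMap_add_sum [Fintype ι] {w : ι → L}
    (hw : ∀ i (g : L →ₐ[ℚ] ℂ), IsSelfAdjoint (g (w i)) ∧ ‖g (w i)‖ ≤ 2) {m : M} {c : ι → M}
    (hm : IsTotallyPositive m) (hc : ∀ i (g : M →ₐ[ℚ] ℂ), IsSelfAdjoint (g (c i)))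
    (hlt : ∀ g : M →ₐ[ℚ] ℂ, 2 * ∑ i, ‖g (c i)‖ < ‖g m‖) :
    IsTotallyPositive (algebraMap M L m + ∑ i, c i • w i) := by
  intro g
  let gM : M →ₐ[ℚ] ℂ := g.comp (IsScalarTower.toAlgHom ℚ M L)
  have hg : g (algebraMap M L m + ∑ i, c i • w i) = gM m + ∑ i, gM (c i) * g (w i) := by
    simp [gM, Algebra.smul_def]
  rw [hg]
  refine pos_of_norm_sub_lt ?_ (hm gM) ?_
  · exact (hm gM).le.isSelfAdjoint.add
      (isSelfAdjoint_sum _ fun i _ => (hc i gM).mul (hw i g).1)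
  · calc ‖gM m + ∑ i, gM (c i) * g (w i) - gM m‖ = ‖∑ i, gM (c i) * g (w i)‖ := by
          rw [add_sub_cancel_left]
      _ ≤ ∑ i, ‖gM (c i)‖ * 2 := norm_sum_le_of_le _ fun i _ => by
          rw [norm_mul]
          gcongr
          exact (hw i g).2
      _ = 2 * ∑ i, ‖gM (c i)‖ := by rw [← Finset.sum_mul, _root_.mul_comm]
      _ < ‖gM m‖ := hlt gM

variable [FiniteDimensional ℚ M] [FiniteDimensional ℚ L]

lemma exists_isTotallyPositive_trace_sq_eq_smul {p : ℕ} (hp : p.Prime) (hp16 : 16 < p)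
    (hM : Module.finrank ℚ M < p) {ζ : L} (hζ : IsPrimitiveRoot ζ (p ^ 2)) {c r : M}
    (hc : IsTotallyPositive c)
    (hr : ∀ g : M →ₐ[ℚ] ℂ, IsSelfAdjoint (g r) ∧ ‖g r‖ ≤ ‖g c‖ / 8) {q : ℚ} (hq : 0 < q) :
    ∃ α : L, IsTotallyPositive α ∧ Algebra.trace M L (α ^ 2) = q • (c ^ 2 + r ^ 2) := by
  have : FiniteDimensional M L := FiniteDimensional.right ℚ M L
  have hdim : (0 : ℚ) < Module.finrank M L := by exact_mod_cast Module.finrank_pos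
  obtain ⟨a, b, b', ha, hb, hb', hsmall⟩ := exists_rat_weights (div_pos hq hdim)
  obtain ⟨w, hw, hw_real⟩ := exists_isTraceOrthogonal (ι := Fin 4 ⊕ Fin 4) hp hM
    (by simpa using hp16) hζ
  refine ⟨_, isTotallyPositive_algebraMap_add_sum hw_real (m := a • c)
    (c := Sum.elim (fun i => b i • c) fun i => b' i • r) (fun g => ?_) (fun i g => ?_)
    fun g => ?_, ?_⟩
  · rw [map_smul]
    exact smul_pos ha (hc g)
  · rcases i with i | i
    · exact (map_smul g (b i) c).symm ▸ (IsSelfAdjoint.all (b i)).smul (hc g).le.isSelfAdjoint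
    · exact (map_smul g (b' i) r).symm ▸ (IsSelfAdjoint.all (b' i)).smul (hr g).1
  · have hgc : 0 < ‖g c‖ := norm_pos_iff.2 (hc g).ne'
    have hsmall' : ∑ i, |(b i : ℝ)| + (∑ i, |(b' i : ℝ)|) / 8 < a / 2 := by exact_mod_cast hsmall
    have hnorm (q : ℚ) (x : M) : ‖g (q • x)‖ = |(q : ℝ)| * ‖g x‖ := by
      rw [map_smul, norm_smul, ← Rat.norm_cast_real, Real.norm_eq_abs]
    simp only [Fintype.sum_sum_type, Sum.elim_inl, Sum.elim_inr, hnorm, ← Finset.sum_mul]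
    calc 2 * ((∑ i, |(b i : ℝ)|) * ‖g c‖ + (∑ i, |(b' i : ℝ)|) * ‖g r‖)
        ≤ 2 * ((∑ i, |(b i : ℝ)|) * ‖g c‖ + (∑ i, |(b' i : ℝ)|) * (‖g c‖ / 8)) := by
          gcongr
          exact (hr g).2
      _ = 2 * (∑ i, |(b i : ℝ)| + (∑ i, |(b' i : ℝ)|) / 8) * ‖g c‖ := by ring
      _ < 2 * (a / 2) * ‖g c‖ := by gcongr
      _ = |(a : ℝ)| * ‖g c‖ := by
          rw [abs_of_pos (by exact_mod_cast ha), mul_div_cancel₀ _ two_ne_zero]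
  · set n := Module.finrank M L
    rw [hw.trace_sq]
    simp only [Fintype.sum_sum_type, Sum.elim_inl, Sum.elim_inr, smul_pow, ← Finset.sum_smul]
    calc n * (a ^ 2 • c ^ 2 + 2 * ((∑ i, b i ^ 2) • c ^ 2 + (∑ i, b' i ^ 2) • r ^ 2))
        = (n * (a ^ 2 + 2 * ∑ i, b i ^ 2)) • c ^ 2 + (n * (2 * ∑ i, b' i ^ 2)) • r ^ 2 := by
          simp only [Algebra.smul_def, map_mul, map_add, map_natCast, map_ofNat]
          ring
      _ = q • (c ^ 2 + r ^ 2) := by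
          rw [hb, hb', mul_div_cancel₀ _ hdim.ne']
          module

lemma exists_isTotallyPositive_trace_sq_eq {K : Type*} [Field K] [Algebra ℚ K] [Algebra K M]
    [Algebra K L] [IsScalarTower K M L] {p : ℕ} (hp : p.Prime) (hp16 : 16 < p)
    (hM : Module.finrank ℚ M < p) {ζ : L} (hζ : IsPrimitiveRoot ζ (p ^ 2)) {x c : K} {r : M}
    (hr : r ^ 2 = algebraMap K M (x - c ^ 2)) (hc : IsTotallyPositive c)
    (hx : ∀ g : K →ₐ[ℚ] ℂ, 0 ≤ g (x - c ^ 2) ∧ ‖g (x - c ^ 2)‖ ≤ 1 / 64 * ‖g c‖ ^ 2) :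
    ∃ α : L, IsTotallyPositive α ∧ Algebra.trace K L (α ^ 2) = x := by
  have : FiniteDimensional K M := FiniteDimensional.right ℚ K M
  have : FiniteDimensional M L := FiniteDimensional.right ℚ M L
  let restrict (g : M →ₐ[ℚ] ℂ) : K →ₐ[ℚ] ℂ := g.comp (IsScalarTower.toAlgHom ℚ K M)
  have hgr (g : M →ₐ[ℚ] ℂ) : g r ^ 2 = restrict g (x - c ^ 2) := by
    rw [← map_pow, hr]
    rfl
  have r_small (g : M →ₐ[ℚ] ℂ) :
      IsSelfAdjoint (g r) ∧ ‖g r‖ ≤ ‖g (algebraMap K M c)‖ / 8 := by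
    obtain ⟨hnonneg, hle⟩ := hx (restrict g)
    have hle_sq : ‖g r‖ ^ 2 ≤ 1 / 64 * ‖g (algebraMap K M c)‖ ^ 2 := by
      rw [← norm_pow, hgr]
      exact hle
    exact ⟨isSelfAdjoint_of_sq_nonneg (hgr g ▸ hnonneg),
      (abs_le_of_sq_le_sq' (hle_sq.trans_eq (by ring)) (by positivity)).2⟩
  have hdim : (Module.finrank K M : ℚ) ≠ 0 := by exact_mod_cast Module.finrank_pos.ne'
  obtain ⟨α, hα, htrace⟩ := exists_isTotallyPositive_trace_sq_eq_smul hp hp16 hM hζ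
    (c := algebraMap K M c) (fun g => hc (restrict g)) r_small
    (q := (Module.finrank K M : ℚ)⁻¹) (by positivity)
  refine ⟨α, hα, ?_⟩
  calc Algebra.trace K L (α ^ 2) = Algebra.trace K M (Algebra.trace M L (α ^ 2)) :=
        (Algebra.trace_trace _).symm
    _ = Algebra.trace K M ((Module.finrank K M : ℚ)⁻¹ • algebraMap K M x) := by
        rw [htrace, hr, ← map_pow, ← map_add, add_sub_cancel]
    _ = (Module.finrank K M : ℚ)⁻¹ • Module.finrank K M • x := by
        rw [map_rat_smul, Algebra.trace_algebraMap]
    _ = x := by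
        rw [← Nat.cast_smul_eq_nsmul ℚ, inv_smul_smul₀ hdim]

end TraceOfSquare

section Conjugation

open IntermediateField
open scoped ComplexConjugate ComplexOrder

/-- The elements of `K` whose complex conjugate is represented by a single element of `K` under
all embeddings into `ℂ`. It is all of a number field `K` exactly when `K` is totally real or a CM
field. -/
def conjSubfield (K : Type*) [Field K] [Algebra ℚ K] : IntermediateField ℚ K where
  carrier := {x | ∃ y, ∀ g : K →ₐ[ℚ] ℂ, g y = conj (g x)}
  mul_mem' := by
    rintro x x' ⟨y, hy⟩ ⟨y', hy'⟩
    exact ⟨y * y', fun g => by rw [map_mul, map_mul, map_mul, hy, hy']⟩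
  add_mem' := by
    rintro x x' ⟨y, hy⟩ ⟨y', hy'⟩
    exact ⟨y + y', fun g => by rw [map_add, map_add, map_add, hy, hy']⟩
  algebraMap_mem' q := ⟨algebraMap ℚ K q, fun g => by simp⟩
  inv_mem' := by
    rintro x ⟨y, hy⟩
    exact ⟨y⁻¹, fun g => by rw [map_inv₀, map_inv₀, map_inv₀, hy]⟩

variable {K L : Type*} [Field K] [Algebra ℚ K] [Field L] [Algebra ℚ L]

lemma mem_conjSubfield {x : K} :
    x ∈ conjSubfield K ↔ ∃ y, ∀ g : K →ₐ[ℚ] ℂ, g y = conj (g x) := Iff.rfl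

lemma mem_conjSubfield_of_isSelfAdjoint {x : K} (hx : ∀ g : K →ₐ[ℚ] ℂ, IsSelfAdjoint (g x)) :
    x ∈ conjSubfield K :=
  ⟨x, fun g => (hx g).star_eq.symm⟩

lemma mem_conjSubfield_of_isPrimitiveRoot {n : ℕ} (hn : n ≠ 0) {ζ : K}
    (hζ : IsPrimitiveRoot ζ n) : ζ ∈ conjSubfield K :=
  ⟨ζ⁻¹, fun g => by
    rw [map_inv₀, Complex.inv_eq_conj ((hζ.map_of_injective (f := g) g.injective).norm'_eq_one hn)]⟩

lemma map_mem_conjSubfield (φ : K →ₐ[ℚ] L) {x : K} (hx : x ∈ conjSubfield K) :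
    φ x ∈ conjSubfield L := by
  obtain ⟨y, hy⟩ := hx
  exact ⟨φ y, fun g => hy (g.comp φ)⟩

lemma conjSubfield_fieldRange_eq_top (hK : conjSubfield K = ⊤) (φ : K →ₐ[ℚ] ℂ) :
    conjSubfield φ.fieldRange = ⊤ := by
  refine eq_top_iff.2 ?_
  rintro ⟨_, x, rfl⟩ -
  exact map_mem_conjSubfield φ.equivFieldRange.toAlgHom (hK ▸ mem_top : x ∈ conjSubfield K)

lemma le_lift_conjSubfield {F E : IntermediateField ℚ ℂ} (hFE : F ≤ E)
    (hF : conjSubfield F = ⊤) : F ≤ lift (conjSubfield E) := by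
  intro x hx
  refine (mem_lift (⟨x, hFE hx⟩ : E)).2 ?_
  exact map_mem_conjSubfield (inclusion hFE) (hF ▸ mem_top : (⟨x, hx⟩ : F) ∈ conjSubfield F)

lemma conjSubfield_eq_top_of_le_lift {E : IntermediateField ℚ ℂ}
    (hE : E ≤ lift (conjSubfield E)) : conjSubfield E = ⊤ :=
  eq_top_iff.2 fun x _ => (mem_lift x).1 (hE x.2)

lemma conjSubfield_iSup_eq_top {ι : Sort*} {F : ι → IntermediateField ℚ ℂ}
    (hF : ∀ i, conjSubfield (F i) = ⊤) : conjSubfield ↥(⨆ i, F i) = ⊤ :=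
  conjSubfield_eq_top_of_le_lift (iSup_le fun i => le_lift_conjSubfield (le_iSup F i) (hF i))

lemma conjSubfield_sup_adjoin_simple_eq_top {F : IntermediateField ℚ ℂ}
    (hF : conjSubfield F = ⊤) {x : ℂ} (hx : x ∈ lift (conjSubfield ↥(F ⊔ ℚ⟮x⟯))) :
    conjSubfield ↥(F ⊔ ℚ⟮x⟯) = ⊤ :=
  conjSubfield_eq_top_of_le_lift
    (sup_le (le_lift_conjSubfield le_sup_left hF) (adjoin_simple_le_iff.2 hx))

lemma conjSubfield_normalClosure_eq_top {F : IntermediateField ℚ ℂ}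
    (hF : conjSubfield F = ⊤) : conjSubfield (normalClosure ℚ F ℂ) = ⊤ :=
  conjSubfield_iSup_eq_top fun φ => conjSubfield_fieldRange_eq_top hF φ

lemma conjSubfield_sup_adjoin_sqrt_eq_top {F : IntermediateField ℚ ℂ} (hF : conjSubfield F = ⊤)
    {x : F} (hx : ∀ g : F →ₐ[ℚ] ℂ, 0 ≤ g x) {r : ℂ} (hr : r ^ 2 = x) :
    conjSubfield ↥(F ⊔ ℚ⟮r⟯) = ⊤ := by
  let r' : ↥(F ⊔ ℚ⟮r⟯) := ⟨r, le_sup_right (a := F) (mem_adjoin_simple_self ℚ r)⟩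
  have hr' : r' ^ 2 = inclusion le_sup_left x := Subtype.ext hr
  refine conjSubfield_sup_adjoin_simple_eq_top hF ((mem_lift r').2 ?_)
  refine mem_conjSubfield_of_isSelfAdjoint fun g => isSelfAdjoint_of_sq_nonneg ?_
  rw [← map_pow, hr']
  exact hx (g.comp (inclusion le_sup_left))

lemma conjSubfield_sup_adjoin_isPrimitiveRoot_eq_top {F : IntermediateField ℚ ℂ}
    (hF : conjSubfield F = ⊤) {n : ℕ} (hn : n ≠ 0) {ζ : ℂ} (hζ : IsPrimitiveRoot ζ n) :
    conjSubfield ↥(F ⊔ ℚ⟮ζ⟯) = ⊤ := by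
  let E := F ⊔ ℚ⟮ζ⟯
  let ζ' : E := ⟨ζ, le_sup_right (a := F) (mem_adjoin_simple_self ℚ ζ)⟩
  have hζ' : IsPrimitiveRoot ζ' n :=
    hζ.of_map_of_injective (f := algebraMap E ℂ) (algebraMap E ℂ).injective
  exact conjSubfield_sup_adjoin_simple_eq_top hF
    ((mem_lift ζ').2 (mem_conjSubfield_of_isPrimitiveRoot hn hζ'))

lemma exists_normal_ge_of_conjSubfield_eq_top {F : IntermediateField ℚ ℂ} [FiniteDimensional ℚ F]
    (hF : conjSubfield F = ⊤) :
    ∃ L : IntermediateField ℚ ℂ,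
      F ≤ L ∧ FiniteDimensional ℚ L ∧ Normal ℚ L ∧ conjSubfield L = ⊤ := by
  have : IsNormalClosure ℚ F (normalClosure ℚ F ℂ) :=
    Algebra.IsAlgebraic.isNormalClosure_normalClosure fun _ => IsAlgClosed.splits _
  exact ⟨normalClosure ℚ F ℂ, F.le_normalClosure, normalClosure.is_finiteDimensional ℚ F ℂ,
    IsNormalClosure.normal (K := F), conjSubfield_normalClosure_eq_top hF⟩

lemma exists_conj_algEquiv {L : IntermediateField ℚ ℂ} [Normal ℚ L] (hL : conjSubfield L = ⊤) :
    ∃ σ : L ≃ₐ[ℚ] L, (∀ x : L, (σ x : ℂ) = conj (x : ℂ)) ∧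
      ∀ (g : L →ₐ[ℚ] ℂ) (x : L), g (σ x) = conj (g x) := by
  let σ := (Complex.conjAe.restrictScalars ℚ).restrictNormal L
  have hσ (x : L) : (σ x : ℂ) = conj (x : ℂ) :=
    AlgEquiv.restrictNormal_commutes (Complex.conjAe.restrictScalars ℚ) L x
  refine ⟨σ, hσ, fun g x => ?_⟩
  obtain ⟨y, hy⟩ := mem_conjSubfield.1 (hL ▸ mem_top : x ∈ conjSubfield L)
  have : σ x = y := Subtype.ext ((hσ x).trans (hy L.val).symm)
  rw [this, hy]

end Conjugation

section TraceRealisation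

open IntermediateField

lemma exists_normal_isTotallyPositive_trace_sq_mul {K : IntermediateField ℚ ℂ}
    [FiniteDimensional ℚ K] (hK : conjSubfield K = ⊤) {x : K} (hx : IsTotallyPositive x) :
    ∃ (L : IntermediateField ℚ ℂ) (hKL : K ≤ L), FiniteDimensional ℚ L ∧ Normal ℚ L ∧
      conjSubfield L = ⊤ ∧ ∃ α : L, IsTotallyPositive α ∧
        ∀ k : K, Algebra.trace ℚ L (α ^ 2 * inclusion hKL k) = Algebra.trace ℚ K (k * x) := by
  obtain ⟨c, hc, hxc⟩ := hx.exists_sq_near (show (0 : ℝ) < 1 / 64 by norm_num)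
  obtain ⟨r, hr⟩ := IsAlgClosed.exists_pow_nat_eq ((x - c ^ 2 : K) : ℂ) two_pos
  let M := K ⊔ ℚ⟮r⟯
  have hM : conjSubfield M = ⊤ := conjSubfield_sup_adjoin_sqrt_eq_top hK (fun g => (hxc g).1) hr
  have : FiniteDimensional ℚ ℚ⟮r⟯ := adjoin.finiteDimensional
    (IsIntegral.of_pow two_pos (hr ▸ (IsIntegral.of_finite ℚ (x - c ^ 2 : K)).map K.val))
  obtain ⟨p, hpM, hp⟩ := Nat.exists_infinite_primes (max 17 (Module.finrank ℚ M + 1))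
  obtain ⟨hp16, hpM⟩ := max_le_iff.1 hpM
  have hp0 : p ^ 2 ≠ 0 := (pow_pos hp.pos 2).ne'
  have hζ := Complex.isPrimitiveRoot_exp (p ^ 2) hp0
  set ζ := Complex.exp _
  have : FiniteDimensional ℚ ℚ⟮ζ⟯ :=
    adjoin.finiteDimensional (hζ.isIntegral (pow_pos hp.pos 2)).tower_top
  obtain ⟨L, hNL, hfin, hnormal, hL⟩ :=
    exists_normal_ge_of_conjSubfield_eq_top
      (conjSubfield_sup_adjoin_isPrimitiveRoot_eq_top hM hp0 hζ)
  have hML : M ≤ L := le_sup_left.trans hNL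
  have hKL : K ≤ L := le_sup_left.trans hML
  let ζL : L := ⟨ζ, hNL (le_sup_right (a := M) (mem_adjoin_simple_self ℚ ζ))⟩
  let rM : M := ⟨r, le_sup_right (a := K) (mem_adjoin_simple_self ℚ r)⟩
  let : Algebra K M := (inclusion le_sup_left).toAlgebra
  let : Algebra M L := (inclusion hML).toAlgebra
  let : Algebra K L := (inclusion hKL).toAlgebra
  have : IsScalarTower K M L := .of_algebraMap_eq fun _ => rfl
  obtain ⟨α, hα, htrace⟩ := exists_isTotallyPositive_trace_sq_eq hp hp16 hpM
    (ζ := ζL) (hζ.of_map_of_injective (f := algebraMap L ℂ) (algebraMap L ℂ).injective)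
    (r := rM) (Subtype.ext hr) hc hxc
  refine ⟨L, hKL, hfin, hnormal, hL, α, hα, fun k => ?_⟩
  have : FiniteDimensional K L := .right ℚ K L
  calc Algebra.trace ℚ L (α ^ 2 * inclusion hKL k)
      = Algebra.trace ℚ K (Algebra.trace K L (k • α ^ 2)) := by
        rw [Algebra.trace_trace, Algebra.smul_def, _root_.mul_comm]
        rfl
    _ = Algebra.trace ℚ K (k * x) := by rw [map_smul, htrace, smul_eq_mul]

end TraceRealisation

section FusionBasis

open IntermediateField
open scoped ComplexConjugate ComplexOrder

variable {Φ K : Type*} [Field K] [Algebra ℚ K]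

lemma algHom_eq_sum_repr [Fintype Φ] (t : Module.Basis Φ ℚ K) (g : K →ₐ[ℚ] ℂ) (x : K) :
    g x = ∑ c, (t.repr x c : ℂ) * g (t c) := by
  conv_lhs => rw [← t.sum_repr x, map_sum]
  simp [Rat.smul_def]

lemma span_range_algHom_basis (t : Module.Basis Φ ℚ K) (g : K →ₐ[ℚ] ℂ) :
    Submodule.span ℚ (Set.range fun a => g (t a)) =
      Subalgebra.toSubmodule g.fieldRange.toSubalgebra :=
  calc Submodule.span ℚ (Set.range fun a => g (t a))
      = (Submodule.span ℚ (Set.range t)).map g.toLinearMap := by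
        rw [Submodule.map_span, ← Set.range_comp]
        rfl
    _ = Subalgebra.toSubmodule g.fieldRange.toSubalgebra := by
        rw [t.span_eq, Submodule.map_top]
        rfl

variable [DecidableEq Φ]

/-- The basis `t` makes the field `K` a fusion ring with identity `one` and involution `star`. The
structure constants `N_{ab}^c` are the coordinates `t.repr (t a * t b) c`, of either sign. -/
structure IsFusionBasis (one : Φ) (star : Φ → Φ) (t : Module.Basis Φ ℚ K) : Prop where
  involutive : Function.Involutive star
  apply_one : t one = 1
  repr_star_mul_star (a b c : Φ) :
    t.repr (t (star a) * t (star b)) (star c) = t.repr (t a * t b) c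
  repr_mul_one (a b : Φ) : t.repr (t a * t b) one = if b = star a then 1 else 0

namespace IsFusionBasis

variable {one : Φ} {star : Φ → Φ} {t : Module.Basis Φ ℚ K}

lemma map {K' : Type*} [Field K'] [Algebra ℚ K'] (ht : IsFusionBasis one star t)
    (e : K ≃ₐ[ℚ] K') : IsFusionBasis one star (t.map e.toLinearEquiv) where
  involutive := ht.involutive
  apply_one := by simp [ht.apply_one]
  repr_star_mul_star a b c := by simpa using ht.repr_star_mul_star a b c
  repr_mul_one a b := by simpa using ht.repr_mul_one a b

lemma repr_mul_star_one (ht : IsFusionBasis one star t) (x : K) (a : Φ) :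
    t.repr (x * t (star a)) one = t.repr x a := by
  have : t.coord one ∘ₗ LinearMap.mulRight ℚ (t (star a)) = t.coord a :=
    t.ext fun b => by
      simp [ht.repr_mul_one, Finsupp.single_apply, ht.involutive.injective.eq_iff, eq_comm]
  exact LinearMap.congr_fun this x

lemma repr_mul_star (ht : IsFusionBasis one star t) (a b : Φ) :
    t.repr (t a * t (star b)) one = if a = b then 1 else 0 := by
  rw [ht.repr_mul_star_one, t.repr_self, Finsupp.single_apply]

lemma repr_mul_eq_repr_star_mul (ht : IsFusionBasis one star t) (a b c : Φ) :
    t.repr (t a * t b) c = t.repr (t (star a) * t c) b :=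
  calc t.repr (t a * t b) c = t.repr (t a * t (star c) * t (star (star b))) one := by
        rw [← ht.repr_mul_star_one, ht.involutive, mul_right_comm]
    _ = t.repr (t (star (star a)) * t (star c)) (star b) := by
        rw [ht.repr_mul_star_one, ht.involutive]
    _ = t.repr (t (star a) * t c) b := ht.repr_star_mul_star _ _ _

-- Frobenius reciprocity says that multiplication by `t (star a)` is adjoint to that by `t a`.
lemma sum_map_mul_mul_conj [Fintype Φ] (ht : IsFusionBasis one star t) (g : K →ₐ[ℚ] ℂ) (a : Φ) :
    ∑ b, g (t a * t b) * conj (g (t b)) = ∑ b, g (t b) * conj (g (t (star a) * t b)) := by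
  simp_rw [algHom_eq_sum_repr t g (_ * _), map_sum, Finset.sum_mul, Finset.mul_sum]
  rw [Finset.sum_comm]
  refine Finset.sum_congr rfl fun c _ => Finset.sum_congr rfl fun b _ => ?_
  rw [ht.repr_mul_eq_repr_star_mul, map_mul conj, map_ratCast]
  ring

lemma map_star [Finite Φ] (ht : IsFusionBasis one star t) (g : K →ₐ[ℚ] ℂ) (a : Φ) :
    g (t (star a)) = conj (g (t a)) := by
  have := Fintype.ofFinite Φ
  have hsum : ∑ b, g (t b) * conj (g (t b)) ≠ 0 := by
    refine (Finset.sum_pos' (fun b _ => mul_star_self_nonneg (g (t b)))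
      ⟨one, Finset.mem_univ _, ?_⟩).ne'
    simp [ht.apply_one]
  have adjoint := ht.sum_map_mul_mul_conj g (star a)
  simp only [ht.involutive a, map_mul, mul_assoc, mul_left_comm (g (t _)) (conj (g (t a))),
    ← Finset.mul_sum] at adjoint
  exact mul_right_cancel₀ hsum adjoint

lemma conjSubfield_eq_top [Finite Φ] (ht : IsFusionBasis one star t) : conjSubfield K = ⊤ := by
  have := Fintype.ofFinite Φ
  refine eq_top_iff.2 fun x _ => ?_
  rw [← t.sum_repr x]
  exact sum_mem fun a _ => (conjSubfield K).smul_mem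
    (mem_conjSubfield.2 ⟨t (star a), fun g => ht.map_star g a⟩)

end IsFusionBasis

/-- The formal codegree `∑ t_a t_{a*}` of a fusion basis: its inverse is the density that turns the
trace form of `K` into the form for which `t` is orthonormal. -/
noncomputable def formalCodegree (star : Φ → Φ) (t : Module.Basis Φ ℚ K) [Fintype Φ] : K :=
  ∑ a, t a * t (star a)

namespace IsFusionBasis

variable {one : Φ} {star : Φ → Φ} {t : Module.Basis Φ ℚ K}

lemma isTotallyPositive_formalCodegree [Fintype Φ] (ht : IsFusionBasis one star t) :
    IsTotallyPositive (formalCodegree star t) := fun g => by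
  simp only [formalCodegree, map_sum, map_mul, ht.map_star]
  exact Finset.sum_pos' (fun a _ => mul_star_self_nonneg (g (t a)))
    ⟨one, Finset.mem_univ _, by simp [ht.apply_one]⟩

lemma trace_eq_repr_mul_formalCodegree [Fintype Φ] (ht : IsFusionBasis one star t) (x : K) :
    Algebra.trace ℚ K x = t.repr (x * formalCodegree star t) one := by
  simp only [Algebra.trace_eq_matrix_trace t, Matrix.trace, Matrix.diag_apply,
    Algebra.leftMulMatrix_eq_repr_mul, formalCodegree, Finset.mul_sum, map_sum,
    Finsupp.finsetSum_apply, ← mul_assoc, ht.repr_mul_star_one]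

lemma trace_mul_inv_formalCodegree [Fintype Φ] (ht : IsFusionBasis one star t) (x : K) :
    Algebra.trace ℚ K (x * (formalCodegree star t)⁻¹) = t.repr x one := by
  have : FiniteDimensional ℚ K := .of_basis t
  rw [ht.trace_eq_repr_mul_formalCodegree,
    inv_mul_cancel_right₀ ht.isTotallyPositive_formalCodegree.ne_zero]

lemma exists_trace_realisation [Finite Φ] (ht : IsFusionBasis one star t) :
    ∃ (φ : K →ₐ[ℚ] ℂ) (L : IntermediateField ℚ ℂ), φ.fieldRange ≤ L ∧ FiniteDimensional ℚ L ∧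
      Normal ℚ L ∧ conjSubfield L = ⊤ ∧ ∃ α : L, IsTotallyPositive α ∧
        ∀ x, ∃ γ : L, (γ : ℂ) = α * conj (α : ℂ) * φ x ∧
          Algebra.trace ℚ L γ = t.repr x one := by
  have := Fintype.ofFinite Φ
  have : FiniteDimensional ℚ K := .of_basis t
  let φ : K →ₐ[ℚ] ℂ := IsAlgClosed.lift
  have : FiniteDimensional ℚ φ.fieldRange := φ.equivFieldRange.toLinearEquiv.finiteDimensional
  have hφ := ht.map φ.equivFieldRange
  obtain ⟨L, hKL, hfin, hnormal, hL, α, hα, htrace⟩ :=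
    exists_normal_isTotallyPositive_trace_sq_mul hφ.conjSubfield_eq_top
      hφ.isTotallyPositive_formalCodegree.inv
  refine ⟨φ, L, hKL, hfin, hnormal, hL, α, hα, fun x => ?_⟩
  have hα_real : conj (α : ℂ) = α := Complex.conj_eq_iff_im.2 (Complex.pos_iff.1 (hα L.val)).2.symm
  refine ⟨α ^ 2 * inclusion hKL (φ.equivFieldRange x), ?_, ?_⟩
  · rw [hα_real, ← pow_two]
    rfl
  · exact (htrace _).trans ((hφ.trace_mul_inv_formalCodegree _).trans (by simp))

end IsFusionBasis

end FusionBasis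

lemma FusionRing.exists_isFusionBasis {Φ : Type} [Fintype Φ] [DecidableEq Φ] (F : FusionRing Φ)
    (hfield : ∃ (K₀ : Type) (instK₀ : Field K₀) (e : (Φ → ℚ) ≃ K₀),
      (∀ x y, e (x + y) = @HAdd.hAdd K₀ K₀ K₀ ⟨instK₀.add⟩ (e x) (e y)) ∧
      (∀ x y, e (fusionMul F x y) = @HMul.hMul K₀ K₀ K₀ ⟨instK₀.mul⟩ (e x) (e y))) :
    ∃ (K : Type) (_ : Field K) (_ : Algebra ℚ K) (t : Module.Basis Φ ℚ K),
      IsFusionBasis F.one F.star t ∧ ∀ a b c, t.repr (t a * t b) c = F.N a b c := by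
  obtain ⟨K, _, e, hadd, hmul⟩ := hfield
  let e : (Φ → ℚ) ≃+ K := { e with map_add' := hadd }
  replace hmul (x y) : e (fusionMul F x y) = e x * e y := hmul x y
  have : CharZero K := charZero_of_inj_zero fun n hn => by
    have h : e (n • Pi.single F.one 1) = 0 := by rw [map_nsmul, nsmul_eq_mul, hn, zero_mul]
    simpa using congrFun ((map_eq_zero_iff e e.injective).1 h) F.one
  let t : Module.Basis Φ ℚ K := .ofEquivFun (e.toLinearEquiv (map_rat_smul e)).symm
  have ht (a : Φ) : t a = e (Pi.single a 1) := by simp [t]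
  have hN (a b c : Φ) : t.repr (t a * t b) c = F.N a b c := by
    simp only [ht, ← hmul]
    simp [t, fusionMul, Pi.single_apply]
  refine ⟨K, inferInstance, inferInstance, t, ⟨F.star_involutive, ?_, ?_, ?_⟩, hN⟩
  · refine mul_right_cancel₀ (t.ne_zero F.one) (t.ext_elem fun c => ?_)
    rw [hN, F.one_mul, _root_.one_mul, t.repr_self, Finsupp.single_apply]
  · exact fun a b c => by rw [hN, hN, F.star_hom]
  · exact fun a b => by rw [hN, F.N_one]

theorem fusionRing_field_realisation_general {Φ K₀ : Type*} [Fintype Φ] [DecidableEq Φ] [Field K₀]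
    [Algebra ℚ K₀] {one : Φ} {star : Φ → Φ} {t : Module.Basis Φ ℚ K₀}
    (ht : IsFusionBasis one star t) :
    ∃ L : IntermediateField ℚ ℂ, FiniteDimensional ℚ L ∧ Normal ℚ L ∧
      (∃ σ : L ≃ₐ[ℚ] L, (∀ x : L, (σ x : ℂ) = (starRingEnd ℂ) (x : ℂ)) ∧
        (∀ (g : L →ₐ[ℚ] ℂ) (x : L), g (σ x) = (starRingEnd ℂ) (g x))) ∧
      ∃ α : L,
        (∀ g : L →ₐ[ℚ] ℂ, (g α).im = 0 ∧ 0 < (g α).re) ∧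
        (∃ β : L, (β : ℂ) = (α : ℂ) * (starRingEnd ℂ) (α : ℂ) ∧ Algebra.trace ℚ L β = 1) ∧
        ∃ K : IntermediateField ℚ ℂ, K ≤ L ∧ Module.finrank ℚ K = Fintype.card Φ ∧
          ∃ θ : Φ → ℂ,
            (∀ a, θ a ∈ K) ∧
            θ one = 1 ∧
            (∀ a, θ (star a) = (starRingEnd ℂ) (θ a)) ∧
            (∀ a b, θ a * θ b = ∑ c, (t.repr (t a * t b) c : ℂ) * θ c) ∧
            LinearIndependent ℚ θ ∧
            Submodule.span ℚ (Set.range θ) = Subalgebra.toSubmodule K.toSubalgebra ∧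
            (∀ a b, ∃ γ : L,
              (γ : ℂ) = (α : ℂ) * (starRingEnd ℂ) (α : ℂ) * θ a * (starRingEnd ℂ) (θ b) ∧
              Algebra.trace ℚ L γ = if a = b then 1 else 0) ∧
            (∀ a b c, ∃ γ : L,
              (γ : ℂ) = (α : ℂ) * (starRingEnd ℂ) (α : ℂ) * θ a * θ b * (starRingEnd ℂ) (θ c) ∧
              Algebra.trace ℚ L γ = t.repr (t a * t b) c) := by
  obtain ⟨φ, L, hKL, hfin, hnormal, hL, α, hα, htrace⟩ := ht.exists_trace_realisation
  have hstar := ht.map_star φ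
  refine ⟨L, hfin, hnormal, exists_conj_algEquiv hL, α, fun g => ?_, ?_, φ.fieldRange, hKL, ?_,
    fun a => φ (t a), fun a => ⟨t a, rfl⟩, by simp [ht.apply_one], hstar, fun a b => ?_,
    t.linearIndependent.map' φ.toLinearMap (LinearMap.ker_eq_bot.2 φ.injective),
    span_range_algHom_basis t φ, fun a b => ?_, fun a b c => ?_⟩
  · exact (Complex.pos_iff.1 (hα g)).symm.imp_left Eq.symm
  · have repr_one_one : t.repr 1 one = 1 := by simp [← ht.apply_one]
    simpa only [map_one, mul_one, repr_one_one] using htrace 1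
  · rw [← φ.equivFieldRange.toLinearEquiv.finrank_eq, Module.finrank_eq_card_basis t]
  · rw [← map_mul, algHom_eq_sum_repr t]
  · simpa only [map_mul, hstar, ht.repr_mul_star, ← mul_assoc] using htrace (t a * t (star b))
  · simpa only [map_mul, hstar, ht.repr_mul_star_one, ← mul_assoc]
      using htrace (t a * t b * t (star c))

/-- If the `ℚ`-algebra of a fusion ring `F` on `Φ` (with `|Φ| = n`) is
isomorphic to a field, then there are: a finite normal extension `𝕃 ⊆ ℂ` of `ℚ` stable under
complex conjugation, with conjugation commuting with all embeddings `𝕃 → ℂ`; a totally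
positive `α ∈ 𝕃` with `Tr_{𝕃/ℚ}(|α|²) = 1`; a subfield `K ⊆ 𝕃` of degree `n`; and a
`ℚ`-algebra isomorphism `θ` from `F` onto `K` with `θ 1 = 1`, `θ (a*) = conj (θ a)`, and
`Tr_{𝕃/ℚ}(|α|² θ a conj (θ b)) = δ_{a,b}`, realising the structure constants as
`N a b c = Tr_{𝕃/ℚ}(|α|² θ a θ b conj (θ c))`. -/
theorem fusionRing_field_realisation
    {Φ : Type} [Fintype Φ] [DecidableEq Φ] (F : FusionRing Φ)
    (hfield : ∃ (K₀ : Type) (instK₀ : Field K₀) (e : (Φ → ℚ) ≃ K₀),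
      (∀ x y, e (x + y) = @HAdd.hAdd K₀ K₀ K₀ ⟨instK₀.add⟩ (e x) (e y)) ∧
      (∀ x y, e (fusionMul F x y) = @HMul.hMul K₀ K₀ K₀ ⟨instK₀.mul⟩ (e x) (e y))) :
    ∃ L : IntermediateField ℚ ℂ, FiniteDimensional ℚ L ∧ Normal ℚ L ∧
      (∃ σ : L ≃ₐ[ℚ] L, (∀ x : L, (σ x : ℂ) = (starRingEnd ℂ) (x : ℂ)) ∧
        (∀ (g : L →ₐ[ℚ] ℂ) (x : L), g (σ x) = (starRingEnd ℂ) (g x))) ∧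
      ∃ α : L,
        (∀ g : L →ₐ[ℚ] ℂ, (g α).im = 0 ∧ 0 < (g α).re) ∧
        (∃ β : L, (β : ℂ) = (α : ℂ) * (starRingEnd ℂ) (α : ℂ) ∧ Algebra.trace ℚ L β = 1) ∧
        ∃ K : IntermediateField ℚ ℂ, K ≤ L ∧ Module.finrank ℚ K = Fintype.card Φ ∧
          ∃ θ : Φ → ℂ,
            (∀ a, θ a ∈ K) ∧
            θ F.one = 1 ∧
            (∀ a, θ (F.star a) = (starRingEnd ℂ) (θ a)) ∧
            (∀ a b, θ a * θ b = ∑ c, (F.N a b c : ℂ) * θ c) ∧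
            LinearIndependent ℚ θ ∧
            Submodule.span ℚ (Set.range θ) = Subalgebra.toSubmodule K.toSubalgebra ∧
            (∀ a b, ∃ γ : L,
              (γ : ℂ) = (α : ℂ) * (starRingEnd ℂ) (α : ℂ) * θ a * (starRingEnd ℂ) (θ b) ∧
              Algebra.trace ℚ L γ = if a = b then 1 else 0) ∧
            (∀ a b c, ∃ γ : L,
              (γ : ℂ) = (α : ℂ) * (starRingEnd ℂ) (α : ℂ) * θ a * θ b * (starRingEnd ℂ) (θ c) ∧
              Algebra.trace ℚ L γ = F.N a b c) := by
  obtain ⟨K₀, _, _, t, ht, hN⟩ := F.exists_isFusionBasis hfield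
  simpa only [hN] using fusionRing_field_realisation_general ht
end

section
/- Let π be a fusion-homomorphism between fusion rings F(Φ,N) and F(Φ',N'), and let S and S' be the canonical unitary matrices of these two fusion rings. Then there exists a map π' : Φ' → Φ such that S'_{πa, b'} / S'_{1', b'} = S_{a, π'b'} / S_{1, π'b'} for all a ∈ Φ and b' ∈ Φ'. -/
open scoped BigOperators
open Complex

/-- A fusion-homomorphism between fusion rings, recorded via its action `p : Φ → Φ'` on the
preferred bases: the `ℚ`-linear extension of `p` is multiplicative, i.e. the image of the
product `a·b = ∑_c N a b c · c` equals the product `p a · p b`. -/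
def IsFusionHom {Φ Φ' : Type} [Fintype Φ] [DecidableEq Φ] [Fintype Φ'] [DecidableEq Φ']
    (F : FusionRing Φ) (F' : FusionRing Φ') (p : Φ → Φ') : Prop :=
  ∀ a b c', (∑ c, if p c = c' then F.N a b c else 0) = F'.N (p a) (p b) c'

/-- `j ∈ Φ` is a unit of the fusion ring if `j · j* = 1`. -/
def IsFusionUnit {Φ : Type} [Fintype Φ] [DecidableEq Φ] (F : FusionRing Φ) (j : Φ) : Prop :=
  ∀ c, F.N j (F.star j) c = if c = F.one then 1 else 0

/-!
Verlinde's formula says that `S` simultaneously diagonalises the matrices of multiplication by the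
basis elements, so that the normalised columns `a ↦ S a i / S 1 i` are characters of the fusion
ring. Conversely, a character is a common eigenvector of these matrices, hence its values are
the diagonal entries belonging to a single column. A fusion-homomorphism preserves the identity,
because a basis element `e` with `e² = e` is the identity; so a normalised column of `S'` pulls back
to a character of the source, that is, to a normalised column of `S`.
-/

/-- A basis element `e` of a fusion ring with `e · e = e`. -/
def FusionRing.IsIdempotent {Φ : Type} [Fintype Φ] [DecidableEq Φ] (F : FusionRing Φ) (e : Φ) :
    Prop :=
  ∀ c, F.N e e c = if e = c then 1 else 0

/-- A character of a fusion ring with values in a `ℚ`-algebra `R`, recorded by its values on the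
basis: the `ℚ`-linear extension of `χ` is a unital ring homomorphism. -/
structure FusionRing.IsCharacter {Φ : Type} [Fintype Φ] [DecidableEq Φ] {R : Type*} [Semiring R]
    [Algebra ℚ R] (F : FusionRing Φ) (χ : Φ → R) : Prop where
  map_one : χ F.one = 1
  map_mul : ∀ a b, ∑ c, F.N a b c • χ c = χ a * χ b

/-- The matrix of multiplication by the basis element `a`: row `b` lists the coefficients of
`a · b`. -/
def FusionRing.fusionMatrix_s3 {Φ : Type} [Fintype Φ] [DecidableEq Φ] (F : FusionRing Φ) (a : Φ) :
    Matrix Φ Φ ℂ :=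
  Matrix.of fun b c => (F.N a b c : ℂ)

/-- The `i`-th column of `S`, normalised to take the value `1` at the identity. For the canonical
unitary matrix these are the characters of the fusion ring. -/
noncomputable def FusionRing.normalizedCol {Φ : Type} [Fintype Φ] [DecidableEq Φ] (F : FusionRing Φ)
    (S : Matrix Φ Φ ℂ) (i a : Φ) : ℂ :=
  S a i / S F.one i

section

open Matrix

variable {Φ Φ' : Type} [Fintype Φ] [DecidableEq Φ] [Fintype Φ'] [DecidableEq Φ']
  {F : FusionRing Φ} {F' : FusionRing Φ'}

theorem FusionRing.isIdempotent_one (F : FusionRing Φ) : F.IsIdempotent F.one :=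
  F.one_mul F.one

theorem FusionRing.IsIdempotent.star {e : Φ} (he : F.IsIdempotent e) :
    F.IsIdempotent (F.star e) := by
  intro c
  have star_inj : F.star e = F.star (F.star c) ↔ e = F.star c :=
    (show Function.Involutive F.star from F.star_involutive).injective.eq_iff
  rw [← F.star_involutive c, F.star_hom, he]
  simp only [star_inj]

theorem FusionRing.IsIdempotent.sum_N_mul_N {e : Φ} (he : F.IsIdempotent e) (b c : Φ) :
    ∑ d, F.N e b d * F.N e d c = F.N e b c := by
  simp [← F.mul_assoc, he _]

theorem FusionRing.IsIdempotent.N_star_self {e : Φ} (he : F.IsIdempotent e) :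
    F.N e (F.star e) e = 1 := by
  rw [F.mul_comm]
  simpa [F.N_one, F.star_involutive] using he.star.sum_N_mul_N e F.one

/- Put `x = e · e*`. Both `1` and `e` have coefficient `1` in `x`, and each of them contributes `1`
to the coefficient of `e` in `e · x`; but `e · x = x`, so they coincide. -/
theorem FusionRing.IsIdempotent.eq_one {e : Φ} (he : F.IsIdempotent e) : e = F.one := by
  by_contra hne
  have contribution_self : F.N e (F.star e) e * F.N e e e = 1 := by
    rw [he.N_star_self, he, if_pos rfl, _root_.one_mul]
  have contribution_one : F.N e (F.star e) F.one * F.N e F.one e = 1 := by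
    rw [F.N_one, if_pos rfl, F.mul_comm, F.one_mul, if_pos rfl, _root_.one_mul]
  have two_le_one : (2 : ℚ) ≤ 1 :=
    calc (2 : ℚ) = ∑ d ∈ {e, F.one}, F.N e (F.star e) d * F.N e d e := by
          rw [Finset.sum_pair hne, contribution_self, contribution_one, one_add_one_eq_two]
      _ ≤ ∑ d, F.N e (F.star e) d * F.N e d e :=
          Finset.sum_le_univ_sum_of_nonneg fun d => mul_nonneg (F.N_nonneg _ _ _) (F.N_nonneg _ _ _)
      _ = 1 := by rw [he.sum_N_mul_N, he.N_star_self]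
  norm_num at two_le_one

theorem IsFusionHom.isIdempotent_map {p : Φ → Φ'} (hp : IsFusionHom F F' p) {e : Φ}
    (he : F.IsIdempotent e) : F'.IsIdempotent (p e) := by
  intro c'
  rw [← hp e e c', Finset.sum_eq_single e]
  · rw [he, if_pos rfl]
  · intro c _ hc
    rw [he, if_neg hc.symm, ite_self]
  · exact fun h => absurd (Finset.mem_univ e) h

theorem IsFusionHom.map_one {p : Φ → Φ'} (hp : IsFusionHom F F' p) : p F.one = F'.one :=
  (hp.isIdempotent_map F.isIdempotent_one).eq_one

theorem IsFusionHom.sum_N_smul_comp {M : Type*} [AddCommMonoid M] [Module ℚ M] {p : Φ → Φ'}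
    (hp : IsFusionHom F F' p) (f : Φ' → M) (a b : Φ) :
    ∑ c, F.N a b c • f (p c) = ∑ c', F'.N (p a) (p b) c' • f c' := by
  simp_rw [← hp a b, Finset.sum_smul, ite_smul, zero_smul]
  rw [Finset.sum_comm]
  simp

theorem FusionRing.IsCharacter.comp {R : Type*} [Semiring R] [Algebra ℚ R] {χ : Φ' → R}
    (hχ : F'.IsCharacter χ) {p : Φ → Φ'} (hp : IsFusionHom F F' p) :
    F.IsCharacter (χ ∘ p) where
  map_one := by rw [Function.comp_apply, hp.map_one, hχ.map_one]
  map_mul a b := (hp.sum_N_smul_comp χ a b).trans (hχ.map_mul (p a) (p b))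

theorem FusionRing.IsCharacter.fusionMatrix_mulVec {χ : Φ → ℂ} (hχ : F.IsCharacter χ) (a : Φ) :
    F.fusionMatrix_s3 a *ᵥ χ = χ a • χ := by
  ext b
  simpa only [mulVec, dotProduct, fusionMatrix_s3, of_apply, Rat.smul_def, Pi.smul_apply,
    smul_eq_mul] using hχ.map_mul a b

variable {S : Matrix Φ Φ ℂ}

theorem IsCanonicalS.one_row_ne_zero (hS : IsCanonicalS F S) (i : Φ) : S F.one i ≠ 0 := by
  intro h
  simpa [h] using (hS.2.1 i).2

theorem IsCanonicalS.conjTranspose_mul_self (hS : IsCanonicalS F S) : Sᴴ * S = 1 :=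
  mul_eq_one_comm.mp hS.1

theorem IsCanonicalS.fusionMatrix_eq (hS : IsCanonicalS F S) (a : Φ) :
    F.fusionMatrix_s3 a = S * diagonal (F.normalizedCol S · a) * Sᴴ := by
  ext b c
  rw [FusionRing.fusionMatrix_s3, of_apply, hS.2.2.2, mul_apply]
  refine Finset.sum_congr rfl fun i _ => ?_
  rw [mul_diagonal, conjTranspose_apply, FusionRing.normalizedCol, starRingEnd_apply]
  ring

theorem IsCanonicalS.fusionMatrix_mul (hS : IsCanonicalS F S) (a : Φ) :
    F.fusionMatrix_s3 a * S = S * diagonal (F.normalizedCol S · a) := by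
  rw [hS.fusionMatrix_eq, Matrix.mul_assoc, hS.conjTranspose_mul_self, Matrix.mul_one]

theorem IsCanonicalS.conjTranspose_mul_fusionMatrix (hS : IsCanonicalS F S) (a : Φ) :
    Sᴴ * F.fusionMatrix_s3 a = diagonal (F.normalizedCol S · a) * Sᴴ := by
  rw [hS.fusionMatrix_eq, Matrix.mul_assoc, ← Matrix.mul_assoc, hS.conjTranspose_mul_self,
    Matrix.one_mul]

theorem IsCanonicalS.isCharacter_normalizedCol (hS : IsCanonicalS F S) (i : Φ) :
    F.IsCharacter (F.normalizedCol S i) where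
  map_one := div_self (hS.one_row_ne_zero i)
  map_mul a b := by
    have col_eigenvector : ∑ c, F.N a b c • S c i = S b i * F.normalizedCol S i a :=
      calc ∑ c, F.N a b c • S c i
          = (F.fusionMatrix_s3 a * S) b i := by
            simp only [mul_apply, FusionRing.fusionMatrix_s3, of_apply, Rat.smul_def]
        _ = S b i * F.normalizedCol S i a := by rw [hS.fusionMatrix_mul, mul_diagonal]
    calc ∑ c, F.N a b c • F.normalizedCol S i c
        = (∑ c, F.N a b c • S c i) / S F.one i := by
          simp only [FusionRing.normalizedCol, Finset.sum_div, smul_div_assoc]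
      _ = F.normalizedCol S i a * F.normalizedCol S i b := by
          rw [col_eigenvector, mul_comm, mul_div_assoc, FusionRing.normalizedCol,
            FusionRing.normalizedCol]

theorem IsCanonicalS.exists_eq_normalizedCol (hS : IsCanonicalS F S) {χ : Φ → ℂ}
    (hχ : F.IsCharacter χ) : ∃ i, χ = F.normalizedCol S i := by
  have coords_ne_zero : Sᴴ *ᵥ χ ≠ 0 := by
    intro h
    have χ_eq_zero : χ = 0 := by
      rw [← one_mulVec χ, ← hS.1, ← mulVec_mulVec, h, mulVec_zero]
    simpa [χ_eq_zero] using hχ.map_one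
  obtain ⟨i, hi⟩ := Function.ne_iff.mp coords_ne_zero
  refine ⟨i, funext fun a => mul_right_cancel₀ hi ?_⟩
  have coords_eigenvector :
      χ a • Sᴴ *ᵥ χ = diagonal (F.normalizedCol S · a) *ᵥ Sᴴ *ᵥ χ := by
    rw [← mulVec_smul, ← hχ.fusionMatrix_mulVec, mulVec_mulVec, mulVec_mulVec,
      hS.conjTranspose_mul_fusionMatrix]
  simpa only [Pi.smul_apply, smul_eq_mul, mulVec_diagonal] using congrFun coords_eigenvector i

end

/-- Given a fusion-homomorphism `π` between fusion rings with canonical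
unitary matrices `S`, `S'`, there is a map `π' : Φ' → Φ` with
`S' (π a) b' / S' 1' b' = S a (π' b') / S 1 (π' b')` for all `a`, `b'`. -/
theorem fusionHom_dual_map_exists
    {Φ Φ' : Type} [Fintype Φ] [DecidableEq Φ] [Fintype Φ'] [DecidableEq Φ']
    (F : FusionRing Φ) (F' : FusionRing Φ') (p : Φ → Φ')
    (hp : IsFusionHom F F' p)
    (S : Matrix Φ Φ ℂ) (S' : Matrix Φ' Φ' ℂ)
    (hS : IsCanonicalS F S) (hS' : IsCanonicalS F' S') :
    ∃ p' : Φ' → Φ, ∀ a b',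
      S' (p a) b' / S' F'.one b' = S a (p' b') / S F.one (p' b') := by
  choose p' hp' using fun b' =>
    hS.exists_eq_normalizedCol ((hS'.isCharacter_normalizedCol b').comp hp)
  exact ⟨p', fun a b' => congrFun (hp' b') a⟩
end

section
/- Let π be a fusion-homomorphism between fusion rings F(Φ,N) and F(Φ',N'), and suppose a, b ∈ Φ satisfy π(a) = π(b). Then there exists a unit j ∈ Φ such that b = j·a (the fusion product of j and a, which is a single basis element). Moreover this j satisfies π(j·d) = π(d) for every d ∈ Φ, and if j ≠ 1 then j·d ≠ d for every d ∈ Φ (j has no fixed points). -/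
open scoped BigOperators
open Complex

/-!
The elements of the kernel `K = {c | π c = 1}` act on the basis without fixed points: the
coefficient of `c` in `a · a*` is that of `a` in `c · a`, and `1 ∈ Φ` alone already exhausts the
coefficient `1` of `1'` in `π(a) · π(a)*`. The constituents of `j · j*` for `j ∈ K` lie in `K`, so
`1` is the only one and `j` is a unit. Multiplication by a unit is a nonnegative matrix
whose inverse is its transpose, hence a permutation matrix. Finally, if `π a = π b` then `1'` occurs
in `π(b · a*)`, so `b · a*` has a constituent `j ∈ K`, and `b` is a constituent of `j · a`.
-/

namespace FusionRing

variable {Φ : Type} [Fintype Φ] [DecidableEq Φ] (F : FusionRing Φ)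

theorem star_injective : Function.Injective F.star :=
  Function.Involutive.injective F.star_involutive

theorem frobenius_reciprocity (a b c : Φ) : F.N (F.star a) c b = F.N a b c := by
  have h : F.N b a c = F.N a (F.star c) (F.star b) := by
    simpa [F.N_one, F.star_injective.eq_iff] using F.mul_assoc b a (F.star c) F.one
  rw [F.mul_comm a, h, ← F.star_hom, F.star_involutive]

theorem N_star_self (a c : Φ) : F.N (F.star a) a c = F.N c a a := by
  rw [F.mul_comm c, ← F.frobenius_reciprocity a c a]

theorem N_star_self_one (a : Φ) : F.N (F.star a) a F.one = 1 := by
  rw [F.N_one, if_pos (F.star_involutive a).symm]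

theorem eq_one_of_mul_self {e : Φ} (he : ∀ c, F.N e e c = if e = c then 1 else 0) :
    e = F.one := by
  have hee : F.N (F.star e) e e = 1 := by rw [N_star_self, he, if_pos rfl]
  -- Both `1` and `e` contribute `1` to the coefficient of `e` in `(e* · e) · e = e* · e`.
  have hsum : ∑ d, F.N (F.star e) e d * F.N d e e = 1 := by
    rw [F.mul_assoc]
    simp [he, hee]
  by_contra hne
  have hle := Finset.add_le_sum (f := fun d => F.N (F.star e) e d * F.N d e e)
    (fun d _ => mul_nonneg (F.N_nonneg _ _ _) (F.N_nonneg _ _ _))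
    (Finset.mem_univ F.one) (Finset.mem_univ e) (Ne.symm hne)
  simp only [hsum, F.N_star_self_one, hee, F.one_mul, he, if_true] at hle
  norm_num at hle

end FusionRing

namespace IsFusionUnit

variable {Φ : Type} [Fintype Φ] [DecidableEq Φ] {F : FusionRing Φ} {j : Φ}

theorem star (hj : IsFusionUnit F j) : IsFusionUnit F (F.star j) := by
  intro c
  rw [F.star_involutive, F.mul_comm, hj]

theorem sum_N_mul_N_star (hj : IsFusionUnit F j) (d e : Φ) :
    ∑ x, F.N j d x * F.N (F.star j) x e = if d = e then 1 else 0 := by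
  rw [← F.mul_assoc]
  simp [F.mul_comm (F.star j) j, hj _, F.one_mul]

theorem N_star_eq_zero_of_N_ne_zero (hj : IsFusionUnit F j) {d e x : Φ} (hx : F.N j d x ≠ 0)
    (hde : d ≠ e) : F.N (F.star j) x e = 0 := by
  have hsum := hj.sum_N_mul_N_star d e
  rw [if_neg hde, Finset.sum_eq_zero_iff_of_nonneg
    fun y _ => mul_nonneg (F.N_nonneg _ _ _) (F.N_nonneg _ _ _)] at hsum
  exact (mul_eq_zero.mp (hsum x (Finset.mem_univ x))).resolve_left hx

theorem exists_N_eq_ite (hj : IsFusionUnit F j) (d : Φ) :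
    ∃ x, ∀ c, F.N j d c = if c = x then 1 else 0 := by
  obtain ⟨x, hx⟩ : ∃ x, F.N j d x ≠ 0 := by
    by_contra! hzero
    simpa [hzero] using hj.sum_N_mul_N_star d d
  have hprod (c : Φ) : F.N j d x * F.N j d c = if x = c then 1 else 0 := by
    rw [← hj.star.sum_N_mul_N_star, F.star_involutive, Finset.sum_eq_single d,
      F.frobenius_reciprocity]
    · intro y _ hy
      rw [hj.N_star_eq_zero_of_N_ne_zero hx hy.symm, zero_mul]
    · simp
  have hone : F.N j d x = 1 := by
    have hsq : F.N j d x * F.N j d x = 1 := by rw [hprod, if_pos rfl]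
    exact (mul_self_eq_one_iff.mp hsq).resolve_right fun hneg => by linarith [F.N_nonneg j d x]
  refine ⟨x, fun c => ?_⟩
  simpa [hone, eq_comm] using hprod c

end IsFusionUnit

namespace IsFusionHom

variable {Φ Φ' : Type} [Fintype Φ] [DecidableEq Φ] [Fintype Φ'] [DecidableEq Φ']
  {F : FusionRing Φ} {F' : FusionRing Φ'} {p : Φ → Φ'}

theorem map_one_s4 (hp : IsFusionHom F F' p) : p F.one = F'.one :=
  F'.eq_one_of_mul_self fun c => by
    rw [← hp, Finset.sum_eq_single F.one] <;> simp +contextual [F.one_mul, eq_comm]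

theorem N_le_N_map (hp : IsFusionHom F F' p) (a b c : Φ) :
    F.N a b c ≤ F'.N (p a) (p b) (p c) := by
  rw [← hp, ← Finset.sum_filter]
  exact Finset.single_le_sum (fun _ _ => F.N_nonneg _ _ _) (by simp)

theorem map_star (hp : IsFusionHom F F' p) (a : Φ) : p (F.star a) = F'.star (p a) := by
  by_contra hne
  have h := hp.N_le_N_map a (F.star a) F.one
  rw [hp.map_one_s4, F.N_one, F'.N_one, if_pos rfl, if_neg hne] at h
  norm_num at h

theorem map_eq_of_N_ne_zero (hp : IsFusionHom F F' p) {j d c : Φ} (hj : p j = F'.one)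
    (hc : F.N j d c ≠ 0) : p c = p d := by
  by_contra hne
  have h := hp.N_le_N_map j d c
  rw [hj, F'.one_mul, if_neg (Ne.symm hne)] at h
  exact hc (h.antisymm (F.N_nonneg j d c))

theorem N_self_eq_zero_of_map_eq_one (hp : IsFusionHom F F' p) {c : Φ} (hc : p c = F'.one)
    (hne : c ≠ F.one) (a : Φ) : F.N c a a = 0 := by
  have hsum : ∑ x with p x = F'.one, F.N (F.star a) a x = 1 := by
    rw [Finset.sum_filter, hp, hp.map_star, F'.N_star_self_one]
  have hle := Finset.add_le_sum (f := F.N (F.star a) a) (fun x _ => F.N_nonneg _ _ x)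
    (show F.one ∈ Finset.univ.filter (p · = F'.one) by simp [hp.map_one_s4])
    (show c ∈ Finset.univ.filter (p · = F'.one) by simp [hc]) hne.symm
  rw [hsum, F.N_star_self_one, F.N_star_self] at hle
  linarith [F.N_nonneg c a a]

theorem isFusionUnit_of_map_eq_one (hp : IsFusionHom F F' p) {j : Φ} (hj : p j = F'.one) :
    IsFusionUnit F j := by
  intro c
  split_ifs with hc
  · rw [hc, F.N_one, if_pos rfl]
  · by_contra hN
    have hpc : p c = F'.one := by
      rw [hp.map_eq_of_N_ne_zero hj hN, hp.map_star, hj, F'.star_one]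
    exact hN (by rw [F.mul_comm, F.N_star_self, hp.N_self_eq_zero_of_map_eq_one hpc hc])

theorem exists_map_eq_one_and_N_ne_zero (hp : IsFusionHom F F' p) {a b : Φ} (hab : p a = p b) :
    ∃ j, p j = F'.one ∧ F.N j a b ≠ 0 := by
  have hsum : ∑ j with p j = F'.one, F.N (F.star a) b j = 1 := by
    rw [Finset.sum_filter, hp, hp.map_star, hab, F'.N_star_self_one]
  obtain ⟨j, hj, hN⟩ := Finset.exists_ne_zero_of_sum_ne_zero (hsum.trans_ne one_ne_zero)
  refine ⟨j, (Finset.mem_filter.mp hj).2, ?_⟩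
  rwa [F.frobenius_reciprocity, F.mul_comm] at hN

end IsFusionHom

/-- If a fusion-homomorphism `π` identifies `a` and `b`, then `b = j·a` for
some unit `j`; multiplication by this `j` permutes the basis (`j·d` is a single basis element
`Jp d`), `π (j·d) = π d` for all `d`, and if `j ≠ 1` then `j` acts without fixed points. -/
theorem fusionHom_eq_implies_unit_relation
    {Φ Φ' : Type} [Fintype Φ] [DecidableEq Φ] [Fintype Φ'] [DecidableEq Φ']
    (F : FusionRing Φ) (F' : FusionRing Φ') (p : Φ → Φ')
    (hp : IsFusionHom F F' p) (a b : Φ) (hab : p a = p b) :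
    ∃ j : Φ, IsFusionUnit F j ∧
      ∃ Jp : Φ → Φ,
        (∀ d c, F.N j d c = if c = Jp d then 1 else 0) ∧
        Jp a = b ∧
        (∀ d, p (Jp d) = p d) ∧
        (j ≠ F.one → ∀ d, Jp d ≠ d) := by
  obtain ⟨j, hj, hjab⟩ := hp.exists_map_eq_one_and_N_ne_zero hab
  have hunit := hp.isFusionUnit_of_map_eq_one hj
  choose Jp hJp using hunit.exists_N_eq_ite
  have hN (d : Φ) : F.N j d (Jp d) ≠ 0 := by simp [hJp]
  refine ⟨j, hunit, Jp, hJp, ?_, fun d => hp.map_eq_of_N_ne_zero hj (hN d), fun hne d hd => ?_⟩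
  · by_contra hb
    exact hjab (by rw [hJp, if_neg (Ne.symm hb)])
  · exact hN d (by rw [hd, hp.N_self_eq_zero_of_map_eq_one hj hne])
end
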